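/- arXiv:2603.22098 — 2 statements merged into one kernel-verified Lean document; each statement's English description precedes it below -/
import Mathlib

section
/- There exists a deterministic online bin-packing algorithm for L-skeletons such that on every finite input sequence it uses at most 2·OPT bins, where OPT is the minimum number of unit bins into which the input L-skeletons can be partitioned so that each part admits a valid packing of the unit bin. -/
/-!
Call an item *small* if both arms are shorter than `1`, *wide* if its horizontal arm has length
`1` and its vertical arm is positive, *tall* if its vertical arm has length `1` and its horizontal
arm has length in `(0, 1)`; the remaining items are full horizontal or vertical segments.

Lower bounds for the optimum (`off_volume`, `off_two`). In one bin, the vertical arms of wide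
items project to non-overlapping intervals, and a wide item crosses every tall item. Hence the
bins of a packing contain `kH` bins with wide items and `kV` further ones with tall items, where
`kH` is at least the total height of the wide items and `kV` at least the total width of the tall
items. Moreover, three vertical segments cannot share a bin with three horizontal segments or
with two wide items, since one of the vertical segments would be interior and would cross them.

The algorithm (`Kind`, `InvS`). All small items go to bin `0`, nested along the diagonal at
generic positions. The first two horizontal segments go to the top of bins `0` and `1`, the first
two vertical segments to the right side of these bins, the others into bins `X` and `Y` with
`{X, Y} = {1, 2}`, the naming being fixed as late as possible. By symmetry, assume that no tall
item comes before the first wide one, the lead. The lead goes to the origin of bin `0`. Wide items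
are grouped in the manner of next fit: stack items until one overflows, put the overflowing item
into a group of its own, start again. The first group is the lead with items in bin `X`; counting
the lead in its load leaves free space in `X`, so that its items can avoid the heights of the
horizontal segments there. The second group is the origin of bin `Y`, and every further group, as
well as every group of tall items, has its own bin. Two consecutive groups (a stack and the item
overflowing it) have total size more than `1`, which gives at most `2 * kH` and `2 * kV` groups up
to an off-by-one that is compensated by bins `0`, `1`, `2` (`inv_bound`).

The invariant `Good` says that the history looks like this, possibly after reflection in the
diagonal. Every good history can be extended by every item (`ext_good`), and the algorithm
chooses any such extension.
-/

/-- An L-skeleton, given by its two arm lengths. -/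
structure LSkel where
  lx : ℝ
  ly : ℝ

/-- The parameter constraints of an L-skeleton: arm lengths in `[0,1]`. -/
def LSkel.IsValid (L : LSkel) : Prop :=
  0 ≤ L.lx ∧ L.lx ≤ 1 ∧ 0 ≤ L.ly ∧ L.ly ≤ 1

/-- The point set `([0,ℓx]×{0}) ∪ ({0}×[0,ℓy])` of an L-skeleton. -/
def LSkel.toSet (L : LSkel) : Set (ℝ × ℝ) :=
  Set.Icc ((0, 0) : ℝ × ℝ) (L.lx, 0) ∪ Set.Icc ((0, 0) : ℝ × ℝ) (0, L.ly)

/-- The two endpoints `(ℓx, 0)` and `(0, ℓy)` of an L-skeleton. -/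
def LSkel.endpoints (L : LSkel) : Set (ℝ × ℝ) := {(L.lx, 0), (0, L.ly)}

/-- Translate a set in the plane by a vector. -/
def planeTranslate (v : ℝ × ℝ) (S : Set (ℝ × ℝ)) : Set (ℝ × ℝ) := (· + v) '' S

/-- The unit bin `[0,1]²`. -/
def unitBin : Set (ℝ × ℝ) := Set.Icc ((0, 0) : ℝ × ℝ) (1, 1)

/-- The online decision (bin index, translation vector) made by algorithm `A` for the `i`-th
item of `l`: it depends only on the first `i+1` items. -/
def placeOf (A : List LSkel → ℕ × ℝ × ℝ) (l : List LSkel) (i : Fin l.length) : ℕ × ℝ × ℝ :=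
  A (l.take (i.1 + 1))

/-- The placements produced by `A` on input `l` form valid bin packings of skeletons: every
translate lies in the unit bin, and two translates sharing a bin are disjoint, except that a
translated endpoint of one skeleton may lie on the other. -/
def OnlinePacks (A : List LSkel → ℕ × ℝ × ℝ) (l : List LSkel) : Prop :=
  (∀ i : Fin l.length, planeTranslate (placeOf A l i).2 (l.get i).toSet ⊆ unitBin) ∧
  ∀ i j : Fin l.length, i ≠ j → (placeOf A l i).1 = (placeOf A l j).1 →
    planeTranslate (placeOf A l i).2 (l.get i).toSet ∩
        planeTranslate (placeOf A l j).2 (l.get j).toSet ⊆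
      planeTranslate (placeOf A l i).2 (l.get i).endpoints ∪
        planeTranslate (placeOf A l j).2 (l.get j).endpoints

/-- The number of distinct bins used by `A` on input `l`. -/
def binsUsed (A : List LSkel → ℕ × ℝ × ℝ) (l : List LSkel) : ℕ :=
  ((Finset.univ : Finset (Fin l.length)).image fun i => (placeOf A l i).1).card

/-- The items of `l` can be packed offline into `m` unit bins (skeleton packing: disjoint
except that translated endpoints may lie on another skeleton). -/
def OffPacks (l : List LSkel) (m : ℕ) : Prop :=
  ∃ (bin : Fin l.length → ℕ) (v : Fin l.length → ℝ × ℝ),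
    (∀ i, bin i < m) ∧
    (∀ i, planeTranslate (v i) (l.get i).toSet ⊆ unitBin) ∧
    ∀ i j, i ≠ j → bin i = bin j →
      planeTranslate (v i) (l.get i).toSet ∩ planeTranslate (v j) (l.get j).toSet ⊆
        planeTranslate (v i) (l.get i).endpoints ∪ planeTranslate (v j) (l.get j).endpoints

/-- The offline optimum: the minimum number of unit bins into which `l` can be packed. -/
noncomputable def OPT (l : List LSkel) : ℕ := sInf {m | OffPacks l m}

/-- A placed L-skeleton: its arm lengths, the position `(a, b)` of its corner, and its bin. -/
structure Pl where
  lx : ℝ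
  ly : ℝ
  a : ℝ
  b : ℝ
  bin : ℕ

namespace Pl

/-- The item that was placed. -/
def skel (p : Pl) : LSkel := ⟨p.lx, p.ly⟩

/-- `(x, y)` lies on the translated skeleton. -/
def On (p : Pl) (x y : ℝ) : Prop :=
  (y = p.b ∧ p.a ≤ x ∧ x ≤ p.a + p.lx) ∨ (x = p.a ∧ p.b ≤ y ∧ y ≤ p.b + p.ly)

/-- `(x, y)` is an endpoint of the translated skeleton. -/
def End (p : Pl) (x y : ℝ) : Prop :=
  (x = p.a + p.lx ∧ y = p.b) ∨ (x = p.a ∧ y = p.b + p.ly)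

/-- Two placed skeletons may share a bin. -/
def Cmp (p q : Pl) : Prop := ∀ x y, p.On x y → q.On x y → p.End x y ∨ q.End x y

/-- Reflection of a placed skeleton in the diagonal. -/
def swap (p : Pl) : Pl := ⟨p.ly, p.lx, p.b, p.a, p.bin⟩

/-- The translate lies in the unit bin (in terms of corner and endpoints). -/
def InBin (p : Pl) : Prop := 0 ≤ p.a ∧ 0 ≤ p.b ∧ p.a + p.lx ≤ 1 ∧ p.b + p.ly ≤ 1

end Pl

/-- Reflection of an item in the diagonal. -/
def LSkel.swap (L : LSkel) : LSkel := ⟨L.ly, L.lx⟩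

open Pl

/-! ### Compatibility of two placed skeletons -/

lemma Pl.On.swap {p : Pl} {x y : ℝ} (h : p.swap.On x y) : p.On y x := by
  rcases h with h | h
  · exact Or.inr h
  · exact Or.inl h

lemma Pl.On.swap' {p : Pl} {x y : ℝ} (h : p.On x y) : p.swap.On y x := by
  rcases h with h | h
  · exact Or.inr h
  · exact Or.inl h

lemma Pl.End.swap' {p : Pl} {x y : ℝ} (h : p.swap.End x y) : p.End y x := by
  rcases h with h | h
  · exact Or.inr ⟨h.2, h.1⟩
  · exact Or.inl ⟨h.2, h.1⟩

lemma Pl.Cmp.of_swap {p q : Pl} (h : Cmp p.swap q.swap) : Cmp p q := by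
  intro x y hp hq
  exact (h y x hp.swap' hq.swap').imp Pl.End.swap' Pl.End.swap'

lemma Pl.Cmp.symm {p q : Pl} (h : Cmp p q) : Cmp q p :=
  fun x y hq hp => (h x y hp hq).symm

/-- Nested skeletons, with strictly increasing corners, never meet. -/
lemma cmp_chain {p q : Pl} (h1 : p.a < q.a) (h2 : p.b < q.b) : Cmp p q := by
  intro x y hp hq
  exfalso
  rcases hp with hp | hp <;> rcases hq with hq | hq <;> linarith [hp.1, hp.2.1, hq.1, hq.2.1]

/-- Two skeletons with corners at different heights of the same vertical line are compatible
if their vertical arms do not overlap or if one of these arms is degenerate. -/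
lemma cmp_hor {p q : Pl} (h1 : p.a = q.a) (h2 : p.b ≠ q.b) (hp0 : 0 ≤ p.ly) (hq0 : 0 ≤ q.ly)
    (h3 : p.b + p.ly ≤ q.b ∨ q.b + q.ly ≤ p.b ∨ p.ly = 0 ∨ q.ly = 0) : Cmp p q := by
  intro x y hp hq
  rcases hp with ⟨e1, e2, e3⟩ | ⟨e1, e2, e3⟩ <;> rcases hq with ⟨f1, f2, f3⟩ | ⟨f1, f2, f3⟩
  · exact absurd (e1.symm.trans f1) h2
  · rcases h3 with h3 | h3 | h3 | h3
    · exact absurd (by linarith) h2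
    · exact Or.inr (Or.inr ⟨f1, by linarith⟩)
    · exact Or.inl (Or.inr ⟨by linarith, by linarith⟩)
    · exact absurd (by linarith) h2
  · rcases h3 with h3 | h3 | h3 | h3
    · exact Or.inl (Or.inr ⟨e1, by linarith⟩)
    · exact absurd (by linarith) h2
    · exact absurd (by linarith) h2
    · exact Or.inr (Or.inr ⟨by linarith, by linarith⟩)
  · rcases h3 with h3 | h3 | h3 | h3
    · exact Or.inl (Or.inr ⟨e1, by linarith⟩)
    · exact Or.inr (Or.inr ⟨f1, by linarith⟩)
    · exact Or.inl (Or.inr ⟨e1, by linarith⟩)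
    · exact Or.inr (Or.inr ⟨f1, by linarith⟩)

/-- The reflection of `cmp_hor`. -/
lemma cmp_ver {p q : Pl} (h1 : p.b = q.b) (h2 : p.a ≠ q.a) (hp0 : 0 ≤ p.lx) (hq0 : 0 ≤ q.lx)
    (h3 : p.a + p.lx ≤ q.a ∨ q.a + q.lx ≤ p.a ∨ p.lx = 0 ∨ q.lx = 0) : Cmp p q :=
  Cmp.of_swap (cmp_hor (p := p.swap) (q := q.swap) h1 h2 hp0 hq0 h3)

/-- A degenerate vertical segment on the right side of the bin is compatible with everything
whose corner lies strictly to the left. -/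
lemma cmp_right {p q : Pl} (h1 : p.lx = 0) (h2 : p.a = 1) (h3 : q.a < 1) (h4 : q.a + q.lx ≤ 1) :
    Cmp p q := by
  intro x y hp hq
  have hx : x = 1 := by rcases hp with ⟨e1, e2, e3⟩ | ⟨e1, e2, e3⟩ <;> linarith
  rcases hq with ⟨f1, f2, f3⟩ | ⟨f1, f2, f3⟩
  · exact Or.inr (Or.inl ⟨by linarith, f1⟩)
  · linarith

/-- The reflection of `cmp_right`. -/
lemma cmp_top {p q : Pl} (h1 : p.ly = 0) (h2 : p.b = 1) (h3 : q.b < 1) (h4 : q.b + q.ly ≤ 1) :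
    Cmp p q :=
  Cmp.of_swap (cmp_right (p := p.swap) (q := q.swap) h1 h2 h3 h4)

/-! ### Translation to the point-set definitions -/

lemma mem_translate_toSet (L : LSkel) (v : ℝ × ℝ) (n : ℕ) (x y : ℝ) :
    (x, y) ∈ planeTranslate v L.toSet ↔ (Pl.mk L.lx L.ly v.1 v.2 n).On x y := by
  obtain ⟨v1, v2⟩ := v
  simp only [planeTranslate, LSkel.toSet, Set.mem_image, Set.mem_union, Set.mem_Icc, Prod.exists,
    Prod.mk_le_mk, Prod.mk_add_mk, Prod.mk.injEq, Pl.On]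
  constructor
  · rintro ⟨s, t, h, rfl, rfl⟩
    rcases h with ⟨⟨h1, h2⟩, h3, h4⟩ | ⟨⟨h1, h2⟩, h3, h4⟩
    · exact Or.inl ⟨by linarith, by linarith, by linarith⟩
    · exact Or.inr ⟨by linarith, by linarith, by linarith⟩
  · rintro (⟨h1, h2, h3⟩ | ⟨h1, h2, h3⟩)
    · exact ⟨x - v1, y - v2, Or.inl ⟨⟨by linarith, by linarith⟩, by linarith, by linarith⟩,
        by ring, by ring⟩
    · exact ⟨x - v1, y - v2, Or.inr ⟨⟨by linarith, by linarith⟩, by linarith, by linarith⟩,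
        by ring, by ring⟩

lemma mem_translate_endpoints (L : LSkel) (v : ℝ × ℝ) (n : ℕ) (x y : ℝ) :
    (x, y) ∈ planeTranslate v L.endpoints ↔ (Pl.mk L.lx L.ly v.1 v.2 n).End x y := by
  obtain ⟨v1, v2⟩ := v
  simp only [planeTranslate, LSkel.endpoints, Set.mem_image, Set.mem_insert_iff,
    Set.mem_singleton_iff, Prod.exists, Prod.mk_add_mk, Prod.mk.injEq, Pl.End]
  constructor
  · rintro ⟨s, t, ⟨rfl, rfl⟩ | ⟨rfl, rfl⟩, rfl, rfl⟩
    · exact Or.inl ⟨by ring, by ring⟩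
    · exact Or.inr ⟨by ring, by ring⟩
  · rintro (⟨rfl, rfl⟩ | ⟨rfl, rfl⟩)
    · exact ⟨L.lx, 0, Or.inl ⟨rfl, rfl⟩, by ring, by ring⟩
    · exact ⟨0, L.ly, Or.inr ⟨rfl, rfl⟩, by ring, by ring⟩

lemma cmp_iff (L M : LSkel) (v w : ℝ × ℝ) (n m : ℕ) :
    (planeTranslate v L.toSet ∩ planeTranslate w M.toSet ⊆
      planeTranslate v L.endpoints ∪ planeTranslate w M.endpoints) ↔
    Cmp ⟨L.lx, L.ly, v.1, v.2, n⟩ ⟨M.lx, M.ly, w.1, w.2, m⟩ := by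
  constructor
  · intro h x y hp hq
    have := @h (x, y) ⟨(mem_translate_toSet L v n x y).2 hp,
      (mem_translate_toSet M w m x y).2 hq⟩
    exact this.imp (mem_translate_endpoints L v n x y).1 (mem_translate_endpoints M w m x y).1
  · rintro h ⟨x, y⟩ ⟨hp, hq⟩
    exact (h x y ((mem_translate_toSet L v n x y).1 hp)
      ((mem_translate_toSet M w m x y).1 hq)).imp
      (mem_translate_endpoints L v n x y).2 (mem_translate_endpoints M w m x y).2

lemma inBin_iff (L : LSkel) (v : ℝ × ℝ) (n : ℕ) (hL : L.IsValid) :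
    planeTranslate v L.toSet ⊆ unitBin ↔ InBin ⟨L.lx, L.ly, v.1, v.2, n⟩ := by
  have key : ∀ x y, (x, y) ∈ unitBin ↔ (0 ≤ x ∧ 0 ≤ y) ∧ x ≤ 1 ∧ y ≤ 1 := by
    intro x y
    simp [unitBin]
  obtain ⟨h1, h2, h3, h4⟩ := hL
  constructor
  · intro h
    have e1 := (key _ _).1 (h ((mem_translate_toSet L v n v.1 (v.2 + L.ly)).2
      (Or.inr ⟨rfl, by simpa using h3, le_rfl⟩)))
    have e2 := (key _ _).1 (h ((mem_translate_toSet L v n (v.1 + L.lx) v.2).2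
      (Or.inl ⟨rfl, by simpa using h1, le_rfl⟩)))
    exact ⟨e1.1.1, e2.1.2, e2.2.1, e1.2.2⟩
  · rintro ⟨a1, a2, a3, a4⟩ ⟨x, y⟩ hxy
    simp only at a1 a2 a3 a4
    rw [key]
    rcases (mem_translate_toSet L v n x y).1 hxy with ⟨e1, e2, e3⟩ | ⟨e1, e2, e3⟩ <;>
      simp only at e1 e2 e3 <;> refine ⟨⟨?_, ?_⟩, ?_, ?_⟩ <;> linarith

/-! ### Item classes and their totals -/

open Classical in
/-- Counts the full-width horizontal segments. -/
noncomputable def wZh (L : LSkel) : ℕ := if L.lx = 1 ∧ L.ly = 0 then 1 else 0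

open Classical in
/-- Counts the full-height vertical segments. -/
noncomputable def wZv (L : LSkel) : ℕ := if L.lx = 0 ∧ L.ly = 1 then 1 else 0

open Classical in
/-- Counts the wide items: full width and positive height. -/
noncomputable def wNH (L : LSkel) : ℕ := if L.lx = 1 ∧ 0 < L.ly then 1 else 0

open Classical in
/-- The height of a wide item, and `0` for all other items. -/
noncomputable def wSH (L : LSkel) : ℝ := if L.lx = 1 ∧ 0 < L.ly then L.ly else 0

open Classical in
/-- The width of a tall item (full height, positive width less than `1`), and `0` for all other
items. -/
noncomputable def wSV (L : LSkel) : ℝ := if L.ly = 1 ∧ 0 < L.lx ∧ L.lx < 1 then L.lx else 0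

/-- The total of a weight function over a list of items. -/
def tot {M : Type} [AddMonoid M] (f : LSkel → M) (l : List LSkel) : M := (l.map f).sum

lemma tot_cons {M : Type} [AddMonoid M] (f : LSkel → M) (L : LSkel) (l : List LSkel) :
    tot f (L :: l) = f L + tot f l := by simp [tot]

lemma tot_eq_sum {M : Type} [AddCommMonoid M] (f : LSkel → M) (l : List LSkel) :
    tot f l = ∑ i : Fin l.length, f (l.get i) := by
  simp [tot]

/-! ### Lower bounds for the offline optimum -/

/-- Disjoint intervals in `[0,1]` have total length at most `1`. -/
lemma sum_intervals_le {ι : Type} (s : Finset ι) (f g : ι → ℝ) (hg : ∀ i ∈ s, 0 ≤ g i)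
    (hf : ∀ i ∈ s, 0 ≤ f i ∧ f i + g i ≤ 1)
    (hd : ∀ i ∈ s, ∀ j ∈ s, i ≠ j → f i + g i ≤ f j ∨ f j + g j ≤ f i) :
    ∑ i ∈ s, g i ≤ 1 := by
  have h1 : MeasureTheory.volume (⋃ i ∈ s, Set.Ico (f i) (f i + g i)) =
      ∑ i ∈ s, MeasureTheory.volume (Set.Ico (f i) (f i + g i)) := by
    apply MeasureTheory.measure_biUnion_finset
    · intro i hi j hj hij
      rw [Function.onFun, Set.disjoint_left]
      rintro x ⟨hx1, hx2⟩ ⟨hx3, hx4⟩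
      rcases hd i hi j hj hij with h | h <;> linarith
    · intro i _
      exact measurableSet_Ico
  have h2 : MeasureTheory.volume (⋃ i ∈ s, Set.Ico (f i) (f i + g i)) ≤
      MeasureTheory.volume (Set.Icc (0 : ℝ) 1) := by
    apply MeasureTheory.measure_mono
    intro x hx
    simp only [Set.mem_iUnion, Set.mem_Ico] at hx
    obtain ⟨i, hi, hx1, hx2⟩ := hx
    have := hf i hi
    exact ⟨by linarith, by linarith⟩
  rw [h1] at h2
  simp only [Real.volume_Ico, add_sub_cancel_left, Real.volume_Icc, sub_zero] at h2
  rw [← ENNReal.ofReal_sum_of_nonneg hg] at h2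
  exact (ENNReal.ofReal_le_ofReal_iff zero_le_one).1 h2

/-- Full-width skeletons in one bin lie at different heights. -/
lemma wide_ne {p q : Pl} (h : Cmp p q) (hp : p.InBin) (hq : q.InBin) (hp1 : p.lx = 1)
    (hq1 : q.lx = 1) : p.b ≠ q.b := by
  intro e
  obtain ⟨a1, a2, a3, a4⟩ := hp
  obtain ⟨b1, b2, b3, b4⟩ := hq
  rcases h (1 / 2) p.b (Or.inl ⟨rfl, by linarith, by linarith⟩)
    (Or.inl ⟨e, by linarith, by linarith⟩) with (⟨h, _⟩ | ⟨h, _⟩) | (⟨h, _⟩ | ⟨h, _⟩) <;> linarith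

lemma tall_ne {p q : Pl} (h : Cmp p q) (hp : p.InBin) (hq : q.InBin) (hp1 : p.ly = 1)
    (hq1 : q.ly = 1) : p.a ≠ q.a := by
  intro e
  obtain ⟨a1, a2, a3, a4⟩ := hp
  obtain ⟨b1, b2, b3, b4⟩ := hq
  rcases h p.a (1 / 2) (Or.inr ⟨rfl, by linarith, by linarith⟩)
    (Or.inr ⟨e, by linarith, by linarith⟩) with (⟨_, h⟩ | ⟨_, h⟩) | (⟨_, h⟩ | ⟨_, h⟩) <;> linarith

/-- The vertical arms of two wide items in one bin do not overlap. -/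
lemma wide_disj {p q : Pl} (h : Cmp p q) (hp : p.InBin) (hq : q.InBin) (hp1 : p.lx = 1)
    (hq1 : q.lx = 1) (hp2 : 0 < p.ly) (hq2 : 0 < q.ly) :
    p.b + p.ly ≤ q.b ∨ q.b + q.ly ≤ p.b := by
  by_contra! hc
  have hne := wide_ne h hp hq hp1 hq1
  obtain ⟨a1, a2, a3, a4⟩ := hp
  obtain ⟨b1, b2, b3, b4⟩ := hq
  rcases lt_or_gt_of_ne hne with hlt | hlt
  · rcases h 0 q.b (Or.inr ⟨by linarith, by linarith, by linarith⟩)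
      (Or.inl ⟨rfl, by linarith, by linarith⟩)
      with (⟨h, h'⟩ | ⟨h, h'⟩) | (⟨h, h'⟩ | ⟨h, h'⟩) <;> linarith
  · rcases h 0 p.b (Or.inl ⟨rfl, by linarith, by linarith⟩)
      (Or.inr ⟨by linarith, by linarith, by linarith⟩)
      with (⟨h, h'⟩ | ⟨h, h'⟩) | (⟨h, h'⟩ | ⟨h, h'⟩) <;> linarith

lemma Pl.Cmp.swap {p q : Pl} (h : Cmp p q) : Cmp p.swap q.swap :=
  Cmp.of_swap (p := p.swap) (q := q.swap) h

lemma Pl.InBin.swap {p : Pl} (h : p.InBin) : p.swap.InBin := ⟨h.2.1, h.1, h.2.2.2, h.2.2.1⟩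

/-- A wide and a tall item cross. -/
lemma wide_tall {p q : Pl} (h : Cmp p q) (hp : p.InBin) (hq : q.InBin) (hp1 : p.lx = 1)
    (hp2 : 0 < p.ly) (hq1 : q.ly = 1) (hq2 : 0 < q.lx) : False := by
  obtain ⟨a1, a2, a3, a4⟩ := hp
  obtain ⟨b1, b2, b3, b4⟩ := hq
  rcases h q.a p.b (Or.inl ⟨rfl, by linarith, by linarith⟩)
    (Or.inr ⟨rfl, by linarith, by linarith⟩)
    with (⟨h, h'⟩ | ⟨h, h'⟩) | (⟨h, h'⟩ | ⟨h, h'⟩) <;> linarith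

/-- A full-width item sharing a bin with an interior vertical segment touches the bottom or the
top side of the bin. -/
lemma wide_seg {p q : Pl} (h : Cmp p q) (hp : p.InBin) (hq : q.InBin) (hp1 : p.lx = 1)
    (hp2 : 0 ≤ p.ly) (hq1 : q.ly = 1) (hqa : 0 < q.a) (hqb : q.a < 1) : p.b = 0 ∨ p.b = 1 := by
  obtain ⟨a1, a2, a3, a4⟩ := hp
  obtain ⟨b1, b2, b3, b4⟩ := hq
  rcases h q.a p.b (Or.inl ⟨rfl, by linarith, by linarith⟩)
    (Or.inr ⟨rfl, by linarith, by linarith⟩)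
    with (⟨h, h'⟩ | ⟨h, h'⟩) | (⟨h, h'⟩ | ⟨h, h'⟩)
  · linarith
  · linarith
  · left; linarith
  · right; linarith

/-- An offline packing, in terms of `Pl`. -/
lemma offPacks_pl {l : List LSkel} {m : ℕ} (hv : ∀ L ∈ l, L.IsValid) (h : OffPacks l m) :
    ∃ P : Fin l.length → Pl, (∀ i, (P i).bin < m) ∧ (∀ i, (P i).skel = l.get i) ∧
      (∀ i, (P i).InBin) ∧ ∀ i j, i ≠ j → (P i).bin = (P j).bin → Cmp (P i) (P j) := by
  obtain ⟨bin, v, h1, h2, h3⟩ := h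
  refine ⟨fun i => ⟨(l.get i).lx, (l.get i).ly, (v i).1, (v i).2, bin i⟩, h1, fun i => rfl,
    fun i => (inBin_iff _ _ _ (hv _ (l.get_mem i))).1 (h2 i), fun i j hij hb =>
    (cmp_iff _ _ _ _ _ _).1 (h3 i j hij hb)⟩

/-- Items of a class whose members occupy disjoint unit-interval stretches inside every bin have
total size at most the number of bins containing such items. -/
lemma sum_le_bins {n : ℕ} (s : Finset (Fin n)) (bin : Fin n → ℕ) (f g : Fin n → ℝ)
    (hg : ∀ i ∈ s, 0 ≤ g i) (hf : ∀ i ∈ s, 0 ≤ f i ∧ f i + g i ≤ 1)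
    (hd : ∀ i ∈ s, ∀ j ∈ s, i ≠ j → bin i = bin j → f i + g i ≤ f j ∨ f j + g j ≤ f i) :
    ∑ i ∈ s, g i ≤ ((s.image bin).card : ℝ) := by
  rw [← Finset.sum_fiberwise_of_maps_to (t := s.image bin) (g := bin)
    (fun i hi => Finset.mem_image_of_mem _ hi)]
  calc _ ≤ ∑ _b ∈ s.image bin, (1 : ℝ) := by
        apply Finset.sum_le_sum
        intro b _
        apply sum_intervals_le _ f g
        · intro i hi
          exact hg i (Finset.mem_filter.1 hi).1
        · intro i hi
          exact hf i (Finset.mem_filter.1 hi).1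
        · intro i hi j hj hij
          obtain ⟨hi1, hi2⟩ := Finset.mem_filter.1 hi
          obtain ⟨hj1, hj2⟩ := Finset.mem_filter.1 hj
          exact hd i hi1 j hj1 hij (hi2.trans hj2.symm)
    _ = _ := by simp

/-- Wide and tall items need separate bins, so the optimum is at least the sum of the two
volume bounds. -/
lemma off_volume {l : List LSkel} {m : ℕ} (hv : ∀ L ∈ l, L.IsValid) (h : OffPacks l m) :
    ∃ kH kV : ℕ, kH + kV ≤ m ∧ tot wSH l ≤ kH ∧ tot wSV l ≤ kV := by
  classical
  obtain ⟨P, hb, hs, hin, hc⟩ := offPacks_pl hv h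
  have hsx : ∀ i, (l.get i).lx = (P i).lx := fun i => by rw [← hs i]; rfl
  have hsy : ∀ i, (l.get i).ly = (P i).ly := fun i => by rw [← hs i]; rfl
  set sH : Finset (Fin l.length) := {i | (P i).lx = 1 ∧ 0 < (P i).ly} with hsH
  set sV : Finset (Fin l.length) := {i | (P i).ly = 1 ∧ 0 < (P i).lx ∧ (P i).lx < 1} with hsV
  have mH : ∀ i, i ∈ sH ↔ (P i).lx = 1 ∧ 0 < (P i).ly := by intro i; simp [hsH]
  have mV : ∀ i, i ∈ sV ↔ (P i).ly = 1 ∧ 0 < (P i).lx ∧ (P i).lx < 1 := by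
    intro i; simp [hsV]
  refine ⟨(sH.image fun i => (P i).bin).card, (sV.image fun i => (P i).bin).card, ?_, ?_, ?_⟩
  · rw [← Finset.card_union_of_disjoint]
    · calc _ ≤ (Finset.range m).card := by
            apply Finset.card_le_card
            intro b hb'
            simp only [Finset.mem_union, Finset.mem_image] at hb'
            rcases hb' with ⟨i, _, rfl⟩ | ⟨i, _, rfl⟩ <;> exact Finset.mem_range.2 (hb i)
        _ = m := Finset.card_range m
    · rw [Finset.disjoint_left]
      intro b h1 h2
      simp only [Finset.mem_image] at h1 h2
      obtain ⟨i, hi, rfl⟩ := h1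
      obtain ⟨j, hj, hij⟩ := h2
      obtain ⟨hi1, hi2⟩ := (mH i).1 hi
      obtain ⟨hj1, hj2, hj3⟩ := (mV j).1 hj
      have hne : i ≠ j := by rintro rfl; linarith
      exact wide_tall (hc i j hne hij.symm) (hin i) (hin j) hi1 hi2 hj1 hj2
  · have : tot wSH l = ∑ i ∈ sH, (P i).ly := by
      rw [tot_eq_sum, hsH, Finset.sum_filter]
      exact Finset.sum_congr rfl fun i _ => by simp only [wSH, hsx, hsy]
    rw [this]
    apply sum_le_bins sH (fun i => (P i).bin) (fun i => (P i).b)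
    · intro i hi; exact ((mH i).1 hi).2.le
    · intro i hi; exact ⟨(hin i).2.1, (hin i).2.2.2⟩
    · intro i hi j hj hij hbij
      exact wide_disj (hc i j hij hbij) (hin i) (hin j) ((mH i).1 hi).1 ((mH j).1 hj).1
        ((mH i).1 hi).2 ((mH j).1 hj).2
  · have : tot wSV l = ∑ i ∈ sV, (P i).lx := by
      rw [tot_eq_sum, hsV, Finset.sum_filter]
      exact Finset.sum_congr rfl fun i _ => by simp only [wSV, hsx, hsy]
    rw [this]
    apply sum_le_bins sV (fun i => (P i).bin) (fun i => (P i).a)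
    · intro i hi; exact ((mV i).1 hi).2.1.le
    · intro i hi; exact ⟨(hin i).1, (hin i).2.2.1⟩
    · intro i hi j hj hij hbij
      exact wide_disj (p := (P i).swap) (q := (P j).swap) (hc i j hij hbij).swap (hin i).swap
        (hin j).swap ((mV i).1 hi).1 ((mV j).1 hj).1 ((mV i).1 hi).2.1 ((mV j).1 hj).2.1

lemma off_pos {l : List LSkel} {m : ℕ} (h : OffPacks l m) (hl : l ≠ []) : 1 ≤ m := by
  obtain ⟨bin, v, h1, _⟩ := h
  have := h1 ⟨0, List.length_pos_iff.2 hl⟩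
  omega

open Classical in
lemma tot_ite_card {l : List LSkel} (f : LSkel → ℕ) (Q : LSkel → Prop)
    (hf : ∀ L, f L = if Q L then 1 else 0) :
    tot f l = (Finset.univ.filter fun i : Fin l.length => Q (l.get i)).card := by
  rw [tot_eq_sum, Finset.card_filter]
  exact Finset.sum_congr rfl fun i _ => hf _

/-- Three vertical segments in one bin leave room for at most one wide item and for at most two
horizontal segments: one of the vertical segments is interior. -/
lemma off_two {l : List LSkel} {m : ℕ} (hv : ∀ L ∈ l, L.IsValid) (h : OffPacks l m)
    (h3 : 3 ≤ tot wZv l) (h4 : 3 ≤ tot wZh l ∨ 2 ≤ tot wNH l) : 2 ≤ m := by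
  classical
  by_contra hm
  obtain ⟨P, hb, hs, hin, hc⟩ := offPacks_pl hv h
  have hsx : ∀ i, (l.get i).lx = (P i).lx := fun i => by rw [← hs i]; rfl
  have hsy : ∀ i, (l.get i).ly = (P i).ly := fun i => by rw [← hs i]; rfl
  have hc' : ∀ i j, i ≠ j → Cmp (P i) (P j) := fun i j hij => hc i j hij (by
    have := hb i
    have := hb j
    omega)
  obtain ⟨z, hz1, hz2, hz3, hz4⟩ : ∃ z, (P z).lx = 0 ∧ (P z).ly = 1 ∧ 0 < (P z).a ∧
      (P z).a < 1 := by
    rw [tot_ite_card (l := l) wZv (fun L => L.lx = 0 ∧ L.ly = 1)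
      fun L => by unfold wZv; split_ifs <;> rfl] at h3
    obtain ⟨i, j, k, hi, hj, hk, hij, hik, hjk⟩ := Finset.two_lt_card_iff.1 h3
    simp only [Finset.mem_filter, Finset.mem_univ, true_and, hsx, hsy] at hi hj hk
    have n1 := tall_ne (hc' _ _ hij) (hin _) (hin _) hi.2 hj.2
    have n2 := tall_ne (hc' _ _ hik) (hin _) (hin _) hi.2 hk.2
    have n3 := tall_ne (hc' _ _ hjk) (hin _) (hin _) hj.2 hk.2
    by_contra! hcon
    have e : ∀ z, (P z).lx = 0 ∧ (P z).ly = 1 → (P z).a = 0 ∨ (P z).a = 1 := by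
      intro z hz
      rcases (hin z).1.eq_or_lt with h0 | h0
      · exact Or.inl h0.symm
      · have := hcon z hz.1 hz.2 h0
        have := (hin z).2.2.1
        exact Or.inr (by linarith)
    rcases e i hi with h1 | h1 <;> rcases e j hj with h2 | h2 <;> rcases e k hk with h5 | h5 <;>
      simp_all
  have hw : ∀ i, (P i).lx = 1 → (P i).b = 0 ∨ (P i).b = 1 := by
    intro i hi
    have hne : i ≠ z := by rintro rfl; linarith
    exact wide_seg (hc' i z hne) (hin i) (hin z) hi
      (hsy i ▸ (hv _ (l.get_mem i)).2.2.1) hz2 hz3 hz4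
  rcases h4 with h4 | h4
  · rw [tot_ite_card (l := l) wZh (fun L => L.lx = 1 ∧ L.ly = 0)
      fun L => by unfold wZh; split_ifs <;> rfl] at h4
    obtain ⟨i, j, k, hi, hj, hk, hij, hik, hjk⟩ := Finset.two_lt_card_iff.1 h4
    simp only [Finset.mem_filter, Finset.mem_univ, true_and, hsx, hsy] at hi hj hk
    have n1 := wide_ne (hc' _ _ hij) (hin _) (hin _) hi.1 hj.1
    have n2 := wide_ne (hc' _ _ hik) (hin _) (hin _) hi.1 hk.1
    have n3 := wide_ne (hc' _ _ hjk) (hin _) (hin _) hj.1 hk.1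
    rcases hw i hi.1 with h1 | h1 <;> rcases hw j hj.1 with h2 | h2 <;>
      rcases hw k hk.1 with h5 | h5 <;> simp_all
  · rw [tot_ite_card (l := l) wNH (fun L => L.lx = 1 ∧ 0 < L.ly)
      fun L => by unfold wNH; split_ifs <;> rfl] at h4
    obtain ⟨i, j, hi, hj, hij⟩ := Finset.one_lt_card_iff.1 h4
    simp only [Finset.mem_filter, Finset.mem_univ, true_and, hsx, hsy] at hi hj
    have e : ∀ i, (P i).lx = 1 ∧ 0 < (P i).ly → (P i).b = 0 := by
      intro i hi
      rcases hw i hi.1 with h | h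
      · exact h
      · have := (hin i).2.2.2
        linarith [hi.2]
    exact wide_ne (hc' _ _ hij) (hin _) (hin _) hi.1 hj.1 ((e i hi).trans (e j hj).symm)

/-- Every input has an offline packing, one item per bin. -/
lemma off_exists (l : List LSkel) (hv : ∀ L ∈ l, L.IsValid) : OffPacks l l.length := by
  refine ⟨fun i => i.1, fun _ => (0, 0), fun i => i.2, fun i => ?_, fun i j hij h => ?_⟩
  · obtain ⟨h1, h2, h3, h4⟩ := hv _ (l.get_mem i)
    rw [inBin_iff _ _ 0 ⟨h1, h2, h3, h4⟩]
    exact ⟨le_rfl, le_rfl, by simpa using h2, by simpa using h4⟩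
  · exact absurd (Fin.ext h) hij

lemma off_OPT (l : List LSkel) (hv : ∀ L ∈ l, L.IsValid) : OffPacks l (OPT l) :=
  Nat.sInf_mem (s := {m | OffPacks l m}) ⟨_, off_exists l hv⟩

/-! ### The invariant maintained by the algorithm -/

/-- The possible situations of a placed item while the first wide or tall item (if any) is a
wide one, the *lead*.

Bin `0` contains the small items, with corners on the diagonal, and the lead at the origin.
Bins `0` and `1` take one horizontal segment along the top and one vertical segment along the
right side. Among bins `1` and `2`, bin `X` is reserved for further horizontal segments, and
bin `Y` for further vertical segments.

Wide items are distributed to `r` consecutive groups: a group of odd index is filled with a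
stack of items until the next wide item overflows it, and this one item alone forms the next
group. The first group is the lead together with items in bin `X`, the second group sits at the
origin of bin `Y`, and the `j`-th group, `j ≥ 3`, is in bin `2 * j + 1`. Tall items are treated
likewise, with `rv` groups, the `j`-th one in bin `2 * j + 2`.

The counts `zh`, `zv`, `nh` are those of horizontal segments, vertical segments, and wide items;
`c` is the top of the stack in bin `X`, while `s` and `sv` are the loads of the current groups
of wide and of tall items. -/
inductive Kind (X Y zh zv nh r rv : ℕ) (c s sv : ℝ) (p : Pl) : Prop
  | small (h1 : p.bin = 0) (h2 : p.a = p.b) (h3 : 0 < p.a) (h4 : p.a + p.lx < 1)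
      (h5 : p.b + p.ly < 1) (h6 : 0 ≤ p.lx) (h7 : 0 ≤ p.ly)
  | top (h1 : p.lx = 1) (h2 : p.ly = 0) (h3 : p.a = 0) (h4 : p.b = 1)
      (h5 : p.bin = 0 ∧ 1 ≤ zh ∨ p.bin = 1 ∧ 2 ≤ zh)
  | right (h1 : p.lx = 0) (h2 : p.ly = 1) (h3 : p.a = 1) (h4 : p.b = 0)
      (h5 : p.bin = 0 ∧ 1 ≤ zv ∨ p.bin = 1 ∧ 2 ≤ zv)
  | hline (h1 : p.lx = 1) (h2 : p.ly = 0) (h3 : p.a = 0) (h4 : 0 < p.b) (h5 : p.b < 1)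
      (h6 : p.bin = X) (h7 : 3 ≤ zh)
  | vline (h1 : p.lx = 0) (h2 : p.ly = 1) (h3 : p.b = 0) (h4 : 0 < p.a) (h5 : p.a < 1)
      (h6 : p.bin = Y) (h7 : 3 ≤ zv)
  | lead (h1 : p.lx = 1) (h2 : 0 < p.ly) (h3 : p.ly ≤ 1) (h4 : p.a = 0) (h5 : p.b = 0)
      (h6 : p.bin = 0) (h7 : 1 ≤ r)
  | hx (h1 : p.lx = 1) (h2 : 0 < p.ly) (h3 : p.a = 0) (h4 : 0 < p.b) (h5 : p.b + p.ly ≤ 1)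
      (h6 : p.bin = X) (h7 : p.b + p.ly ≤ c) (h8 : 2 ≤ nh) (h9 : 1 ≤ r)
  | hy (h1 : p.lx = 1) (h2 : 0 < p.ly) (h3 : p.ly ≤ 1) (h4 : p.a = 0) (h5 : p.b = 0)
      (h6 : p.bin = Y) (h7 : 2 ≤ r) (h8 : 2 ≤ nh)
  | hc (j : ℕ) (h1 : p.lx = 1) (h2 : 0 < p.ly) (h3 : p.a = 0) (h4 : 0 ≤ p.b)
      (h5 : p.b + p.ly ≤ 1) (h6 : p.bin = 2 * j + 1) (h7 : 3 ≤ j) (h8 : j ≤ r)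
      (h9 : j = r → p.b + p.ly ≤ s)
  | vc (j : ℕ) (h1 : p.ly = 1) (h2 : 0 < p.lx) (h3 : p.b = 0) (h4 : 0 ≤ p.a)
      (h5 : p.a + p.lx ≤ 1) (h6 : p.bin = 2 * j + 2) (h7 : 1 ≤ j) (h8 : j ≤ rv)
      (h9 : j = rv → p.a + p.lx ≤ sv)

/-- Which of the bins `1` and `2` is `X` and which is `Y`: as long as only one of them is
needed for its purpose, it is bin `1`. -/
def XYok (X Y : ℕ) (A B : Prop) : Prop :=
  ((X = 1 ∧ Y = 2) ∨ (X = 2 ∧ Y = 1)) ∧ (A → ¬B → X = 1) ∧ (B → ¬A → X = 2)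

/-- Bin `X` is needed. -/
def NeedX (zh nh : ℕ) : Prop := 3 ≤ zh ∨ 2 ≤ nh

/-- Bin `Y` is needed. -/
def NeedY (zv : ℕ) (SH : ℝ) : Prop := 3 ≤ zv ∨ 1 < SH

/-- The state of the groups of wide items: each of the `q` completed pairs, consisting of a stack
and the item that overflows it, has total size more than `1`; the last group is either a stack
of load `s` or such an overflowing item. -/
def Hok (nh r : ℕ) (c s SH : ℝ) : Prop :=
  (r = 0 ∧ nh = 0 ∧ SH = 0 ∧ c = 0) ∨
  (∃ q : ℕ, r = 2 * q + 1 ∧ q + s ≤ SH ∧ 0 < s ∧ s ≤ 1 ∧ (q = 0 → 0 ≤ c ∧ c < s) ∧ 1 ≤ nh ∧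
    (1 ≤ q → 2 ≤ nh)) ∨
  (∃ q : ℕ, r = 2 * q + 2 ∧ (q : ℝ) + 1 < SH ∧ 2 ≤ nh)

/-- The state of the groups of tall items. -/
def Vok (r rv : ℕ) (sv SV : ℝ) : Prop :=
  (rv = 0 ∧ SV = 0) ∨
  (1 ≤ r ∧ ((∃ q : ℕ, rv = 2 * q + 1 ∧ q + sv ≤ SV ∧ 0 < sv ∧ sv ≤ 1) ∨
    ∃ q : ℕ, rv = 2 * q + 2 ∧ (q : ℝ) + 1 < SV))

/-- The invariant of the history `h` (most recent item first), with its state variables. -/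
structure InvS (h : List Pl) (X Y zh zv nh r rv : ℕ) (c s sv SH SV : ℝ) : Prop where
  pw : h.Pairwise fun p q => p.bin = q.bin → Cmp p q
  kind : ∀ p ∈ h, Kind X Y zh zv nh r rv c s sv p
  xy : XYok X Y (NeedX zh nh) (NeedY zv SH)
  hok : Hok nh r c s SH
  vok : Vok r rv sv SV
  ezh : tot wZh (h.map skel) = zh
  ezv : tot wZv (h.map skel) = zv
  enh : tot wNH (h.map skel) = nh
  esh : tot wSH (h.map skel) = SH
  esv : tot wSV (h.map skel) = SV

/-- The invariant, for some values of the state variables. -/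
def HInv (h : List Pl) : Prop :=
  ∃ (X Y zh zv nh r rv : ℕ) (c s sv SH SV : ℝ), InvS h X Y zh zv nh r rv c s sv SH SV

lemma Kind.mono {X Y zh zv nh r rv zh' zv' nh' r' rv' : ℕ} {c s sv c' s' sv' : ℝ} {p : Pl}
    (h : Kind X Y zh zv nh r rv c s sv p) (h1 : zh ≤ zh') (h2 : zv ≤ zv') (h3 : nh ≤ nh')
    (h4 : r < r' ∨ r = r' ∧ s ≤ s') (h5 : rv < rv' ∨ rv = rv' ∧ sv ≤ sv') (h6 : c ≤ c') :
    Kind X Y zh' zv' nh' r' rv' c' s' sv' p := by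
  cases h with
  | small e1 e2 e3 e4 e5 e6 e7 => exact .small e1 e2 e3 e4 e5 e6 e7
  | top e1 e2 e3 e4 e5 => exact .top e1 e2 e3 e4 (by omega)
  | right e1 e2 e3 e4 e5 => exact .right e1 e2 e3 e4 (by omega)
  | hline e1 e2 e3 e4 e5 e6 e7 => exact .hline e1 e2 e3 e4 e5 e6 (by omega)
  | vline e1 e2 e3 e4 e5 e6 e7 => exact .vline e1 e2 e3 e4 e5 e6 (by omega)
  | lead e1 e2 e3 e4 e5 e6 e7 => exact .lead e1 e2 e3 e4 e5 e6 (by omega)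
  | hx e1 e2 e3 e4 e5 e6 e7 e8 e9 =>
    exact .hx e1 e2 e3 e4 e5 e6 (e7.trans h6) (by omega) (by omega)
  | hy e1 e2 e3 e4 e5 e6 e7 e8 => exact .hy e1 e2 e3 e4 e5 e6 (by omega) (by omega)
  | hc j e1 e2 e3 e4 e5 e6 e7 e8 e9 =>
    refine .hc j e1 e2 e3 e4 e5 e6 e7 (by omega) fun hj => ?_
    rcases h4 with h4 | ⟨h4, h4'⟩
    · omega
    · exact (e9 (by omega)).trans h4'
  | vc j e1 e2 e3 e4 e5 e6 e7 e8 e9 =>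
    refine .vc j e1 e2 e3 e4 e5 e6 e7 (by omega) fun hj => ?_
    rcases h5 with h5 | ⟨h5, h5'⟩
    · omega
    · exact (e9 (by omega)).trans h5'

lemma Kind.inBin {X Y zh zv nh r rv : ℕ} {c s sv : ℝ} {p : Pl}
    (h : Kind X Y zh zv nh r rv c s sv p) : p.InBin := by
  cases h <;> refine ⟨?_, ?_, ?_, ?_⟩ <;> linarith

/-- When bin `X` or bin `Y` becomes needed, the two bins can be named accordingly: if neither
was needed before, no item has a placement that depends on the naming. -/
lemma InvS.choose {h : List Pl} {X Y zh zv nh r rv : ℕ} {c s sv SH SV : ℝ}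
    (H : InvS h X Y zh zv nh r rv c s sv SH SV) (A B : Prop) (hA : NeedX zh nh → A)
    (hB : NeedY zv SH → B) :
    ∃ X' Y', XYok X' Y' A B ∧ ∀ q ∈ h, Kind X' Y' zh zv nh r rv c s sv q := by
  by_cases hn : NeedX zh nh ∨ NeedY zv SH
  · refine ⟨X, Y, ⟨H.xy.1, fun a b => ?_, fun b a => ?_⟩, H.kind⟩
    · have : ¬NeedY zv SH := fun hh => b (hB hh)
      exact H.xy.2.1 (hn.resolve_right this) this
    · have : ¬NeedX zh nh := fun hh => a (hA hh)
      exact H.xy.2.2 (hn.resolve_left this) this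
  · have key : ∀ X' Y', ∀ q ∈ h, Kind X' Y' zh zv nh r rv c s sv q := by
      intro X' Y' q hq
      have hn' : ¬((3 ≤ zh ∨ 2 ≤ nh) ∨ 3 ≤ zv ∨ 1 < SH) := hn
      cases H.kind q hq with
      | small e1 e2 e3 e4 e5 e6 e7 => exact .small e1 e2 e3 e4 e5 e6 e7
      | top e1 e2 e3 e4 e5 => exact .top e1 e2 e3 e4 e5
      | right e1 e2 e3 e4 e5 => exact .right e1 e2 e3 e4 e5
      | hline e1 e2 e3 e4 e5 e6 e7 => exact absurd (Or.inl (Or.inl e7)) hn'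
      | vline e1 e2 e3 e4 e5 e6 e7 => exact absurd (Or.inr (Or.inl e7)) hn'
      | lead e1 e2 e3 e4 e5 e6 e7 => exact .lead e1 e2 e3 e4 e5 e6 e7
      | hx e1 e2 e3 e4 e5 e6 e7 e8 e9 => exact absurd (Or.inl (Or.inr e8)) hn'
      | hy e1 e2 e3 e4 e5 e6 e7 e8 => exact absurd (Or.inl (Or.inr e8)) hn'
      | hc j e1 e2 e3 e4 e5 e6 e7 e8 e9 => exact .hc j e1 e2 e3 e4 e5 e6 e7 e8 e9
      | vc j e1 e2 e3 e4 e5 e6 e7 e8 e9 => exact .vc j e1 e2 e3 e4 e5 e6 e7 e8 e9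
    by_cases hb : A
    · exact ⟨1, 2, ⟨Or.inl ⟨rfl, rfl⟩, fun _ _ => rfl, fun _ h => absurd hb h⟩, key 1 2⟩
    · exact ⟨2, 1, ⟨Or.inr ⟨rfl, rfl⟩, fun h _ => absurd h hb, fun _ _ => rfl⟩, key 2 1⟩

/-- Adding an item to the history. -/
lemma InvS.add {h : List Pl} {X Y zh zv nh r rv X' Y' zh' zv' nh' r' rv' : ℕ}
    {c s sv SH SV c' s' sv' SH' SV' : ℝ} (H : InvS h X Y zh zv nh r rv c s sv SH SV) {p : Pl}
    (hk : ∀ q ∈ h, Kind X' Y' zh zv nh r rv c s sv q)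
    (hp : Kind X' Y' zh' zv' nh' r' rv' c' s' sv' p)
    (hc : ∀ q ∈ h, p.bin = q.bin → Cmp p q)
    (h4 : r < r' ∨ r = r' ∧ s ≤ s') (h5 : rv < rv' ∨ rv = rv' ∧ sv ≤ sv') (h6 : c ≤ c')
    (hxy : XYok X' Y' (NeedX zh' nh') (NeedY zv' SH')) (hok : Hok nh' r' c' s' SH')
    (vok : Vok r' rv' sv' SV') (e1 : wZh p.skel + zh = zh') (e2 : wZv p.skel + zv = zv')
    (e3 : wNH p.skel + nh = nh') (e4 : wSH p.skel + SH = SH') (e5 : wSV p.skel + SV = SV') :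
    HInv (p :: h) := by
  refine ⟨X', Y', zh', zv', nh', r', rv', c', s', sv', SH', SV', List.pairwise_cons.2 ⟨hc, H.pw⟩,
    ?_, hxy, hok, vok, ?_, ?_, ?_, ?_, ?_⟩
  · intro q hq
    rcases List.mem_cons.1 hq with rfl | hq
    · exact hp
    · exact (hk q hq).mono (by omega) (by omega) (by omega) h4 h5 h6
  · rw [List.map_cons, tot_cons, H.ezh, e1]
  · rw [List.map_cons, tot_cons, H.ezv, e2]
  · rw [List.map_cons, tot_cons, H.enh, e3]
  · rw [List.map_cons, tot_cons, H.esh, e4]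
  · rw [List.map_cons, tot_cons, H.esv, e5]

lemma inv_nil : HInv [] :=
  ⟨1, 2, 0, 0, 0, 0, 0, 0, 0, 0, 0, 0, List.Pairwise.nil, by simp,
    ⟨Or.inl ⟨rfl, rfl⟩, fun _ _ => rfl, fun h => by norm_num [NeedY] at h⟩,
    Or.inl ⟨rfl, rfl, rfl, rfl⟩, Or.inl ⟨rfl, rfl⟩, rfl, rfl, rfl, rfl, rfl⟩

/-- Generic positions exist: some value in a given open interval is not taken by `f`. -/
lemma exists_avoid (h : List Pl) (f : Pl → ℝ) {u v : ℝ} (huv : u < v) :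
    ∃ x, u < x ∧ x < v ∧ ∀ q ∈ h, f q ≠ x := by
  obtain ⟨x, hx1, hx2⟩ := ((Set.Ioo_infinite huv).sdiff
    (List.finite_toSet (h.map f))).nonempty
  refine ⟨x, hx1.1, hx1.2, fun q hq e => hx2 ?_⟩
  exact List.mem_map.2 ⟨q, hq, e⟩

/-! ### Placing a new item -/

lemma ext_small {h : List Pl} (H : HInv h) {L : LSkel} (hL : L.IsValid) (h1 : L.lx < 1)
    (h2 : L.ly < 1) : ∃ p : Pl, p.skel = L ∧ HInv (p :: h) := by
  obtain ⟨X, Y, zh, zv, nh, r, rv, c, s, sv, SH, SV, H⟩ := H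
  obtain ⟨t, ht0, ht1, ht⟩ := exists_avoid h Pl.a
    (show (0 : ℝ) < min (1 - L.lx) (1 - L.ly) from lt_min (by linarith) (by linarith))
  obtain ⟨ht1, ht2⟩ := lt_min_iff.1 ht1
  obtain ⟨p, hp, plx, ply, pa, pb, pbin⟩ : ∃ p : Pl, p.skel = L ∧ p.lx = L.lx ∧ p.ly = L.ly ∧
    p.a = t ∧ p.b = t ∧ p.bin = 0 := ⟨⟨L.lx, L.ly, t, t, 0⟩, rfl, rfl, rfl, rfl, rfl, rfl⟩
  refine ⟨p, hp, H.add H.kind (.small pbin (by linarith) (by linarith) (by linarith) (by linarith)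
    (plx ▸ hL.1) (ply ▸ hL.2.2.1)) ?_ (Or.inr ⟨rfl, le_rfl⟩) (Or.inr ⟨rfl, le_rfl⟩) le_rfl H.xy
    H.hok H.vok ?_ ?_ ?_ ?_ ?_⟩
  · intro q hq hb
    have hXY := H.xy.1
    have htq := ht q hq
    cases H.kind q hq with
    | small e1 e2 e3 e4 e5 e6 e7 =>
      rcases lt_or_gt_of_ne htq with hlt | hlt
      · exact (cmp_chain (by linarith) (by linarith)).symm
      · exact cmp_chain (by linarith) (by linarith)
    | top e1 e2 e3 e4 e5 => exact (cmp_top e2 e4 (by linarith [hL.2.2.1]) (by linarith)).symm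
    | right e1 e2 e3 e4 e5 => exact (cmp_right e1 e3 (by linarith [hL.1]) (by linarith)).symm
    | lead e1 e2 e3 e4 e5 e6 e7 => exact (cmp_chain (by linarith) (by linarith)).symm
    | _ => omega
  all_goals simp [hp, wZh, wZv, wNH, wSH, wSV, h1.ne, h2.ne]

lemma ext_zh {h : List Pl} (H : HInv h) {L : LSkel} (h1 : L.lx = 1) (h2 : L.ly = 0) :
    ∃ p : Pl, p.skel = L ∧ HInv (p :: h) := by
  obtain ⟨X, Y, zh, zv, nh, r, rv, c, s, sv, SH, SV, H⟩ := H
  obtain ⟨X', Y', hxy, hk⟩ := H.choose (NeedX (zh + 1) nh) (NeedY zv SH)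
    (fun h => by unfold NeedX at *; omega) id
  have hXY := hxy.1
  obtain ⟨t, ht0, ht1, ht⟩ := exists_avoid h Pl.b (show (0 : ℝ) < 1 by norm_num)
  -- the first two segments go to the top of bins `0` and `1`, all others into bin `X'`
  have hpos : ∃ p : Pl, p.skel = L ∧ Kind X' Y' (zh + 1) zv nh r rv c s sv p ∧
      ∀ q ∈ h, p.bin = q.bin → Cmp p q := by
    by_cases hz : 2 ≤ zh
    · obtain ⟨p, hp, plx, ply, pa, pb, pbin⟩ : ∃ p : Pl, p.skel = L ∧ p.lx = L.lx ∧ p.ly = L.ly ∧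
        p.a = 0 ∧ p.b = t ∧ p.bin = X' := ⟨⟨L.lx, L.ly, 0, t, X'⟩, rfl, rfl, rfl, rfl, rfl, rfl⟩
      refine ⟨p, hp, .hline (by linarith) (by linarith) (by linarith) (by linarith) (by linarith)
        pbin (by omega), fun q hq hb => ?_⟩
      have htq : p.b ≠ q.b := by rw [pb]; exact (ht q hq).symm
      cases hk q hq with
      | top e1 e2 e3 e4 e5 =>
        exact cmp_hor (by linarith) htq (by linarith) (by linarith) (by right; right; left; linarith)
      | right e1 e2 e3 e4 e5 => exact (cmp_right e1 e3 (by linarith) (by linarith)).symm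
      | hline e1 e2 e3 e4 e5 e6 e7 =>
        exact cmp_hor (by linarith) htq (by linarith) (by linarith) (by right; right; left; linarith)
      | hx e1 e2 e3 e4 e5 e6 e7 e8 e9 =>
        exact cmp_hor (by linarith) htq (by linarith) (by linarith) (by right; right; left; linarith)
      | _ => omega
    · obtain ⟨p, hp, plx, ply, pa, pb, pbin⟩ : ∃ p : Pl, p.skel = L ∧ p.lx = L.lx ∧ p.ly = L.ly ∧
        p.a = 0 ∧ p.b = 1 ∧ p.bin = zh := ⟨⟨L.lx, L.ly, 0, 1, zh⟩, rfl, rfl, rfl, rfl, rfl, rfl⟩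
      refine ⟨p, hp, .top (by linarith) (by linarith) pa pb (by omega), fun q hq hb => ?_⟩
      cases hk q hq with
      | top e1 e2 e3 e4 e5 => omega
      | hline e1 e2 e3 e4 e5 e6 e7 => omega
      | hc j e1 e2 e3 e4 e5 e6 e7 e8 e9 => omega
      | vc j e1 e2 e3 e4 e5 e6 e7 e8 e9 => omega
      | _ => exact cmp_top (by linarith) pb (by linarith) (by linarith)
  obtain ⟨p, hp, hkp, hcp⟩ := hpos
  refine ⟨p, hp, H.add hk hkp hcp (Or.inr ⟨rfl, le_rfl⟩) (Or.inr ⟨rfl, le_rfl⟩) le_rfl hxy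
    H.hok H.vok ?_ ?_ ?_ ?_ ?_⟩
  all_goals simp [hp, wZh, wZv, wNH, wSH, wSV, h1, h2, add_comm]

lemma ext_zv {h : List Pl} (H : HInv h) {L : LSkel} (h1 : L.lx = 0) (h2 : L.ly = 1) :
    ∃ p : Pl, p.skel = L ∧ HInv (p :: h) := by
  obtain ⟨X, Y, zh, zv, nh, r, rv, c, s, sv, SH, SV, H⟩ := H
  obtain ⟨X', Y', hxy, hk⟩ := H.choose (NeedX zh nh) (NeedY (zv + 1) SH)
    id (fun h => h.imp (fun h => by omega) id)
  have hXY := hxy.1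
  obtain ⟨t, ht0, ht1, ht⟩ := exists_avoid h Pl.a (show (0 : ℝ) < 1 by norm_num)
  -- the first two segments go to the right of bins `0` and `1`, all others into bin `Y'`
  have hpos : ∃ p : Pl, p.skel = L ∧ Kind X' Y' zh (zv + 1) nh r rv c s sv p ∧
      ∀ q ∈ h, p.bin = q.bin → Cmp p q := by
    by_cases hz : 2 ≤ zv
    · obtain ⟨p, hp, plx, ply, pa, pb, pbin⟩ : ∃ p : Pl, p.skel = L ∧ p.lx = L.lx ∧ p.ly = L.ly ∧
        p.a = t ∧ p.b = 0 ∧ p.bin = Y' := ⟨⟨L.lx, L.ly, t, 0, Y'⟩, rfl, rfl, rfl, rfl, rfl, rfl⟩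
      refine ⟨p, hp, .vline (by linarith) (by linarith) (by linarith) (by linarith) (by linarith)
        pbin (by omega), fun q hq hb => ?_⟩
      have htq : p.a ≠ q.a := by rw [pa]; exact (ht q hq).symm
      cases hk q hq with
      | top e1 e2 e3 e4 e5 => exact (cmp_top e2 e4 (by linarith) (by linarith)).symm
      | right e1 e2 e3 e4 e5 =>
        exact cmp_ver (by linarith) htq (by linarith) (by linarith) (by right; right; left; linarith)
      | vline e1 e2 e3 e4 e5 e6 e7 =>
        exact cmp_ver (by linarith) htq (by linarith) (by linarith) (by right; right; left; linarith)
      | hy e1 e2 e3 e4 e5 e6 e7 e8 =>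
        exact cmp_ver (by linarith) htq (by linarith) (by linarith) (by right; right; left; linarith)
      | _ => omega
    · obtain ⟨p, hp, plx, ply, pa, pb, pbin⟩ : ∃ p : Pl, p.skel = L ∧ p.lx = L.lx ∧ p.ly = L.ly ∧
        p.a = 1 ∧ p.b = 0 ∧ p.bin = zv := ⟨⟨L.lx, L.ly, 1, 0, zv⟩, rfl, rfl, rfl, rfl, rfl, rfl⟩
      refine ⟨p, hp, .right (by linarith) (by linarith) pa pb (by omega), fun q hq hb => ?_⟩
      cases hk q hq with
      | right e1 e2 e3 e4 e5 => omega
      | vline e1 e2 e3 e4 e5 e6 e7 => omega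
      | hc j e1 e2 e3 e4 e5 e6 e7 e8 e9 => omega
      | vc j e1 e2 e3 e4 e5 e6 e7 e8 e9 => omega
      | _ => exact cmp_right (by linarith) pa (by linarith) (by linarith)
  obtain ⟨p, hp, hkp, hcp⟩ := hpos
  refine ⟨p, hp, H.add hk hkp hcp (Or.inr ⟨rfl, le_rfl⟩) (Or.inr ⟨rfl, le_rfl⟩) le_rfl hxy
    H.hok H.vok ?_ ?_ ?_ ?_ ?_⟩
  all_goals simp [hp, wZh, wZv, wNH, wSH, wSV, h1, h2, add_comm]

lemma ext_h {h : List Pl} (H : HInv h) {L : LSkel} (h1 : L.lx = 1) (h2 : 0 < L.ly)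
    (h3 : L.ly ≤ 1) : ∃ p : Pl, p.skel = L ∧ HInv (p :: h) := by
  obtain ⟨X, Y, zh, zv, nh, r, rv, c, s, sv, SH, SV, H⟩ := H
  obtain ⟨X', Y', hxy, hk⟩ := H.choose (NeedX zh (nh + 1)) (NeedY zv (SH + L.ly))
    (fun h => by unfold NeedX at *; omega) (fun h => h.imp id (fun h => by linarith))
  have hXY := hxy.1
  have hpos : ∃ (p : Pl) (r' : ℕ) (c' s' : ℝ), p.skel = L ∧
      Kind X' Y' zh zv (nh + 1) r' rv c' s' sv p ∧ (∀ q ∈ h, p.bin = q.bin → Cmp p q) ∧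
      (r < r' ∨ r = r' ∧ s ≤ s') ∧ c ≤ c' ∧ Hok (nh + 1) r' c' s' (SH + L.ly) := by
    rcases H.hok with ⟨hr, hn, hS, hc⟩ | ⟨q, hr, hS, hs0, hs1, hc, hn, hn'⟩ | ⟨q, hr, hS, hn⟩
    · -- the lead
      obtain ⟨p, hp, plx, ply, pa, pb, pbin⟩ : ∃ p : Pl, p.skel = L ∧ p.lx = L.lx ∧ p.ly = L.ly ∧
        p.a = 0 ∧ p.b = 0 ∧ p.bin = 0 := ⟨⟨L.lx, L.ly, 0, 0, 0⟩, rfl, rfl, rfl, rfl, rfl, rfl⟩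
      refine ⟨p, 1, 0, L.ly, hp, .lead (by linarith) (by linarith) (by linarith) pa pb pbin le_rfl,
        fun q hq hb => ?_, Or.inl (by omega), hc.le, Or.inr (Or.inl ⟨0, rfl, ?_, h2, h3,
          fun _ => ⟨le_rfl, h2⟩, by omega, by omega⟩)⟩
      · cases hk q hq with
        | small e1 e2 e3 e4 e5 e6 e7 => exact cmp_chain (by linarith) (by linarith)
        | top e1 e2 e3 e4 e5 => exact (cmp_top e2 e4 (by linarith) (by linarith)).symm
        | right e1 e2 e3 e4 e5 => exact (cmp_right e1 e3 (by linarith) (by linarith)).symm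
        | _ => omega
      · push_cast; linarith
    · by_cases hfit : s + L.ly ≤ 1
      · rcases Nat.eq_zero_or_pos q with rfl | hq0
        · -- the first group continues in bin `X'`, at a generic height below the load
          obtain ⟨hc0, hcs⟩ := hc rfl
          obtain ⟨t, ht0, ht1, ht⟩ := exists_avoid h Pl.b hcs
          obtain ⟨p, hp, plx, ply, pa, pb, pbin⟩ : ∃ p : Pl, p.skel = L ∧ p.lx = L.lx ∧
            p.ly = L.ly ∧ p.a = 0 ∧ p.b = t ∧ p.bin = X' :=
            ⟨⟨L.lx, L.ly, 0, t, X'⟩, rfl, rfl, rfl, rfl, rfl, rfl⟩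
          refine ⟨p, r, t + L.ly, s + L.ly, hp, .hx (by linarith) (by linarith) pa (by linarith)
            (by linarith) pbin (by linarith) (by omega) (by omega), fun q hq hb => ?_,
            Or.inr ⟨rfl, by linarith⟩, by linarith, Or.inr (Or.inl ⟨0, hr, by linarith,
              by linarith, hfit, fun _ => ⟨by linarith, by linarith⟩, by omega, by omega⟩)⟩
          have htq : p.b ≠ q.b := by rw [pb]; exact (ht q hq).symm
          cases hk q hq with
          | top e1 e2 e3 e4 e5 =>
            exact cmp_hor (by linarith) htq (by linarith) (by linarith) (by simp [e2])
          | right e1 e2 e3 e4 e5 => exact (cmp_right e1 e3 (by linarith) (by linarith)).symm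
          | hline e1 e2 e3 e4 e5 e6 e7 =>
            exact cmp_hor (by linarith) htq (by linarith) (by linarith) (by simp [e2])
          | hx e1 e2 e3 e4 e5 e6 e7 e8 e9 =>
            exact cmp_hor (by linarith) htq (by linarith) (by linarith)
              (Or.inr (Or.inl (by linarith)))
          | _ => omega
        · obtain ⟨p, hp, plx, ply, pa, pb, pbin⟩ : ∃ p : Pl, p.skel = L ∧ p.lx = L.lx ∧
            p.ly = L.ly ∧ p.a = 0 ∧ p.b = s ∧ p.bin = 2 * r + 1 :=
            ⟨⟨L.lx, L.ly, 0, s, 2 * r + 1⟩, rfl, rfl, rfl, rfl, rfl, rfl⟩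
          refine ⟨p, r, c, s + L.ly, hp, .hc r (by linarith) (by linarith) pa (by linarith)
            (by linarith) pbin (by omega) le_rfl (fun _ => by linarith), fun q hq hb => ?_,
            Or.inr ⟨rfl, by linarith⟩, le_rfl, Or.inr (Or.inl ⟨q, hr, by linarith,
              by linarith, hfit, fun _ => by omega, by omega, by omega⟩)⟩
          cases hk q hq with
          | hc j e1 e2 e3 e4 e5 e6 e7 e8 e9 =>
            have := e9 (by omega)
            exact cmp_hor (by linarith) (by linarith : q.b < p.b).ne' (by linarith) (by linarith)
              (Or.inr (Or.inl (by linarith)))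
          | top e1 e2 e3 e4 e5 => omega
          | right e1 e2 e3 e4 e5 => omega
          | _ => omega
      · have hok' : Hok (nh + 1) (r + 1) c 1 (SH + L.ly) :=
          Or.inr (Or.inr ⟨q, by omega, by linarith, by omega⟩)
        rcases Nat.eq_zero_or_pos q with rfl | hq0
        · -- the second group, at the origin of bin `Y'`
          obtain ⟨p, hp, plx, ply, pa, pb, pbin⟩ : ∃ p : Pl, p.skel = L ∧ p.lx = L.lx ∧
            p.ly = L.ly ∧ p.a = 0 ∧ p.b = 0 ∧ p.bin = Y' :=
            ⟨⟨L.lx, L.ly, 0, 0, Y'⟩, rfl, rfl, rfl, rfl, rfl, rfl⟩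
          refine ⟨p, r + 1, c, 1, hp, .hy (by linarith) (by linarith) (by linarith) pa pb pbin
            (by omega) (by omega), fun q hq hb => ?_, Or.inl (by omega), le_rfl, hok'⟩
          cases hk q hq with
          | top e1 e2 e3 e4 e5 => exact (cmp_top e2 e4 (by linarith) (by linarith)).symm
          | right e1 e2 e3 e4 e5 => exact (cmp_right e1 e3 (by linarith) (by linarith)).symm
          | vline e1 e2 e3 e4 e5 e6 e7 =>
            exact cmp_ver (by linarith) (by linarith : p.a < q.a).ne (by linarith) (by linarith)
              (by simp [e1])
          | _ => omega
        · obtain ⟨p, hp, plx, ply, pa, pb, pbin⟩ : ∃ p : Pl, p.skel = L ∧ p.lx = L.lx ∧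
            p.ly = L.ly ∧ p.a = 0 ∧ p.b = 0 ∧ p.bin = 2 * (r + 1) + 1 :=
            ⟨⟨L.lx, L.ly, 0, 0, 2 * (r + 1) + 1⟩, rfl, rfl, rfl, rfl, rfl, rfl⟩
          refine ⟨p, r + 1, c, 1, hp, .hc (r + 1) (by linarith) (by linarith) pa pb.ge
            (by linarith) pbin (by omega) le_rfl (fun _ => by linarith), fun q hq hb => ?_,
            Or.inl (by omega), le_rfl, hok'⟩
          cases hk q hq <;> omega
    · obtain ⟨p, hp, plx, ply, pa, pb, pbin⟩ : ∃ p : Pl, p.skel = L ∧ p.lx = L.lx ∧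
        p.ly = L.ly ∧ p.a = 0 ∧ p.b = 0 ∧ p.bin = 2 * (r + 1) + 1 :=
        ⟨⟨L.lx, L.ly, 0, 0, 2 * (r + 1) + 1⟩, rfl, rfl, rfl, rfl, rfl, rfl⟩
      refine ⟨p, r + 1, c, L.ly, hp, .hc (r + 1) (by linarith) (by linarith) pa pb.ge
        (by linarith) pbin (by omega) le_rfl (fun _ => by linarith), fun q hq hb => ?_,
        Or.inl (by omega), le_rfl, Or.inr (Or.inl ⟨q + 1, by omega, by push_cast; linarith, h2, h3,
          by omega, by omega, by omega⟩)⟩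
      cases hk q hq <;> omega
  obtain ⟨p, r', c', s', hp, hkp, hcp, hr, hc, hok⟩ := hpos
  have hvok : Vok r' rv sv SV := H.vok.imp id (fun hh => ⟨by omega, hh.2⟩)
  refine ⟨p, hp, H.add hk hkp hcp hr (Or.inr ⟨rfl, le_rfl⟩) hc hxy hok hvok ?_ ?_ ?_ ?_ ?_⟩
  all_goals simp [hp, wZh, wZv, wNH, wSH, wSV, h1, h2, h2.ne', add_comm]

lemma ext_v {h : List Pl} {X Y zh zv nh r rv : ℕ} {c s sv SH SV : ℝ}
    (H : InvS h X Y zh zv nh r rv c s sv SH SV) (hr : 1 ≤ r) {L : LSkel} (h1 : L.ly = 1)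
    (h2 : 0 < L.lx) (h3 : L.lx < 1) : ∃ p : Pl, p.skel = L ∧ HInv (p :: h) := by
  have hXY := H.xy.1
  have hpos : ∃ (p : Pl) (rv' : ℕ) (sv' : ℝ), p.skel = L ∧
      Kind X Y zh zv nh r rv' c s sv' p ∧ (∀ q ∈ h, p.bin = q.bin → Cmp p q) ∧
      (rv < rv' ∨ rv = rv' ∧ sv ≤ sv') ∧ Vok r rv' sv' (SV + L.lx) := by
    -- a new group starts with the item at the origin
    have hnew : ∀ sv', L.lx ≤ sv' → Vok r (rv + 1) sv' (SV + L.lx) →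
        ∃ (p : Pl) (rv' : ℕ) (sv' : ℝ), p.skel = L ∧
        Kind X Y zh zv nh r rv' c s sv' p ∧ (∀ q ∈ h, p.bin = q.bin → Cmp p q) ∧
        (rv < rv' ∨ rv = rv' ∧ sv ≤ sv') ∧ Vok r rv' sv' (SV + L.lx) := by
      intro sv' hsv hvok
      obtain ⟨p, hp, plx, ply, pa, pb, pbin⟩ : ∃ p : Pl, p.skel = L ∧ p.lx = L.lx ∧
        p.ly = L.ly ∧ p.a = 0 ∧ p.b = 0 ∧ p.bin = 2 * (rv + 1) + 2 :=
        ⟨⟨L.lx, L.ly, 0, 0, 2 * (rv + 1) + 2⟩, rfl, rfl, rfl, rfl, rfl, rfl⟩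
      refine ⟨p, rv + 1, sv', hp, .vc (rv + 1) (by linarith) (by linarith) pb pa.ge
        (by linarith) pbin (by omega) le_rfl (fun _ => by linarith), fun q hq hb => ?_,
        Or.inl (by omega), hvok⟩
      cases H.kind q hq <;> omega
    rcases H.vok with ⟨hv, hS⟩ | ⟨-, ⟨q, hv, hS, hs0, hs1⟩ | ⟨q, hv, hS⟩⟩
    · exact hnew L.lx le_rfl (Or.inr ⟨hr, Or.inl ⟨0, by omega, by push_cast; linarith, h2, h3.le⟩⟩)
    · by_cases hfit : sv + L.lx ≤ 1
      · obtain ⟨p, hp, plx, ply, pa, pb, pbin⟩ : ∃ p : Pl, p.skel = L ∧ p.lx = L.lx ∧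
          p.ly = L.ly ∧ p.a = sv ∧ p.b = 0 ∧ p.bin = 2 * rv + 2 :=
          ⟨⟨L.lx, L.ly, sv, 0, 2 * rv + 2⟩, rfl, rfl, rfl, rfl, rfl, rfl⟩
        refine ⟨p, rv, sv + L.lx, hp, .vc rv (by linarith) (by linarith) pb (by linarith)
          (by linarith) pbin (by omega) le_rfl (fun _ => by linarith), fun q hq hb => ?_,
          Or.inr ⟨rfl, by linarith⟩, Or.inr ⟨hr, Or.inl ⟨q, hv, by linarith, by linarith, hfit⟩⟩⟩
        cases H.kind q hq with
        | vc j e1 e2 e3 e4 e5 e6 e7 e8 e9 =>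
          have := e9 (by omega)
          exact cmp_ver (by linarith) (by linarith : q.a < p.a).ne' (by linarith) (by linarith)
            (Or.inr (Or.inl (by linarith)))
        | _ => omega
      · exact hnew 1 h3.le (Or.inr ⟨hr, Or.inr ⟨q, by omega, by linarith⟩⟩)
    · exact hnew L.lx le_rfl
        (Or.inr ⟨hr, Or.inl ⟨q + 1, by omega, by push_cast; linarith, h2, h3.le⟩⟩)
  obtain ⟨p, rv', sv', hp, hkp, hcp, hrv, hvok⟩ := hpos
  refine ⟨p, hp, H.add H.kind hkp hcp (Or.inr ⟨rfl, le_rfl⟩) hrv le_rfl H.xy H.hok hvok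
    ?_ ?_ ?_ ?_ ?_⟩
  all_goals simp [hp, wZh, wZv, wNH, wSH, wSV, h1, h2, h3, h2.ne', h3.ne, add_comm]

/-! ### Reflection in the diagonal -/

@[simp] lemma Pl.swap_swap (p : Pl) : p.swap.swap = p := rfl

@[simp] lemma LSkel.swap_swap (L : LSkel) : L.swap.swap = L := rfl

lemma map_swap_swap (h : List Pl) : (h.map Pl.swap).map Pl.swap = h := by
  rw [List.map_map]
  exact List.map_id h

/-- Before the first wide or tall item arrives, the invariant is invariant under reflection. -/
lemma inv_swap {h : List Pl} {X Y zh zv nh r rv : ℕ} {c s sv SH SV : ℝ}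
    (H : InvS h X Y zh zv nh r rv c s sv SH SV) (hr : r = 0) : HInv (h.map Pl.swap) := by
  have hrv : rv = 0 := by
    rcases H.vok with hv | hv
    · exact hv.1
    · omega
  have hnS : nh = 0 ∧ SH = 0 := by
    rcases H.hok with hh | ⟨q, hh, -⟩ | ⟨q, hh, -⟩
    · exact ⟨hh.2.1, hh.2.2.1⟩
    · omega
    · omega
  have hsw : ∀ p ∈ h, Kind Y X zv zh 0 0 0 0 0 0 p.swap ∧ wZh p.swap.skel = wZv p.skel ∧
      wZv p.swap.skel = wZh p.skel ∧ wNH p.swap.skel = 0 ∧ wSH p.swap.skel = 0 ∧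
      wSV p.swap.skel = 0 := by
    intro p hp
    cases H.kind p hp with
    | small e1 e2 e3 e4 e5 e6 e7 =>
      refine ⟨.small e1 e2.symm (e3.trans_eq e2) e5 e4 e7 e6, ?_⟩
      have f1 : p.lx ≠ 1 := by intro h; linarith
      have f2 : p.ly ≠ 1 := by intro h; linarith
      simp [wZh, wZv, wNH, wSH, wSV, Pl.swap, Pl.skel, f1, f2]
    | top e1 e2 e3 e4 e5 =>
      refine ⟨.right e2 e1 e4 e3 e5, ?_⟩
      simp [wZh, wZv, wNH, wSH, wSV, Pl.swap, Pl.skel, e1, e2]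
    | right e1 e2 e3 e4 e5 =>
      refine ⟨.top e2 e1 e4 e3 e5, ?_⟩
      simp [wZh, wZv, wNH, wSH, wSV, Pl.swap, Pl.skel, e1, e2]
    | hline e1 e2 e3 e4 e5 e6 e7 =>
      refine ⟨.vline e2 e1 e3 e4 e5 e6 e7, ?_⟩
      simp [wZh, wZv, wNH, wSH, wSV, Pl.swap, Pl.skel, e1, e2]
    | vline e1 e2 e3 e4 e5 e6 e7 =>
      refine ⟨.hline e2 e1 e3 e4 e5 e6 e7, ?_⟩
      simp [wZh, wZv, wNH, wSH, wSV, Pl.swap, Pl.skel, e1, e2]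
    | _ => omega
  have htot : ∀ {M : Type} [AddMonoid M] (f g : LSkel → M),
      (∀ p ∈ h, f p.swap.skel = g p.skel) →
      tot f ((h.map Pl.swap).map skel) = tot g (h.map skel) := by
    intro M _ f g hfg
    simp only [tot, List.map_map]
    congr 1
    exact List.map_congr_left hfg
  have hzero : ∀ {M : Type} [AddMonoid M], tot (fun _ => (0 : M)) (h.map skel) = 0 := by
    intro M _
    exact List.sum_eq_zero (by simp)
  refine ⟨Y, X, zv, zh, 0, 0, 0, 0, 0, 0, 0, 0, ?_, ?_, ?_, Or.inl ⟨rfl, rfl, rfl, rfl⟩,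
    Or.inl ⟨rfl, rfl⟩, ?_, ?_, ?_, ?_, ?_⟩
  · rw [List.pairwise_map]
    exact H.pw.imp fun hpq hb => Cmp.swap (hpq hb)
  · intro p hp
    obtain ⟨q, hq, rfl⟩ := List.mem_map.1 hp
    exact (hsw q hq).1
  · have h1 := H.xy
    have ex : NeedX zv 0 ↔ NeedY zv SH := by simp [NeedX, NeedY, hnS.2]
    have ey : NeedY zh 0 ↔ NeedX zh nh := by simp [NeedX, NeedY, hnS.1]
    unfold XYok at h1 ⊢
    rw [ex, ey]
    refine ⟨by omega, fun a b => ?_, fun a b => ?_⟩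
    · have := h1.2.2 a b
      omega
    · have := h1.2.1 a b
      omega
  · rw [htot wZh wZv fun p hp => (hsw p hp).2.1, H.ezv]
  · rw [htot wZv wZh fun p hp => (hsw p hp).2.2.1, H.ezh]
  · rw [htot wNH (fun _ => 0) fun p hp => (hsw p hp).2.2.2.1, hzero]
  · rw [htot wSH (fun _ => 0) fun p hp => (hsw p hp).2.2.2.2.1, hzero]
  · rw [htot wSV (fun _ => 0) fun p hp => (hsw p hp).2.2.2.2.2, hzero]

/-- The history satisfies the invariant, possibly after reflection in the diagonal. -/
def Good (h : List Pl) : Prop := HInv h ∨ HInv (h.map Pl.swap)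

lemma Good.swap {h : List Pl} (H : Good h) : Good (h.map Pl.swap) := by
  rcases H with H | H
  · exact Or.inr (by rwa [map_swap_swap])
  · exact Or.inl H

lemma ext_inv {h : List Pl} (H : HInv h) {L : LSkel} (hL : L.IsValid) :
    ∃ p : Pl, p.skel = L ∧ Good (p :: h) := by
  have hL' := hL
  obtain ⟨a1, a2, a3, a4⟩ := hL'
  have lift : (∃ p : Pl, p.skel = L ∧ HInv (p :: h)) → ∃ p : Pl, p.skel = L ∧ Good (p :: h) :=
    fun ⟨p, hp, hi⟩ => ⟨p, hp, Or.inl hi⟩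
  rcases a2.eq_or_lt with e1 | e1
  · rcases a3.eq_or_lt with e2 | e2
    · exact lift (ext_zh H e1 e2.symm)
    · exact lift (ext_h H e1 e2 a4)
  · rcases a4.eq_or_lt with e2 | e2
    · rcases a1.eq_or_lt with e3 | e3
      · exact lift (ext_zv H e3.symm e2)
      · obtain ⟨X, Y, zh, zv, nh, r, rv, c, s, sv, SH, SV, HS⟩ := H
        rcases Nat.eq_zero_or_pos r with hr | hr
        · -- a tall item arrives first: reflecting everything turns it into a wide lead
          obtain ⟨p, hp, hi⟩ := ext_h (inv_swap HS hr) (L := L.swap) e2 e3 a2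
          refine ⟨p.swap, ?_, Or.inr ?_⟩
          · have : p.swap.skel = p.skel.swap := rfl
            rw [this, hp, LSkel.swap_swap]
          · simpa using hi
        · exact lift (ext_v HS hr e2 e3 e1)
    · exact lift (ext_small H hL e1 e2)

lemma ext_good {h : List Pl} (H : Good h) {L : LSkel} (hL : L.IsValid) :
    ∃ p : Pl, p.skel = L ∧ Good (p :: h) := by
  rcases H with H | H
  · exact ext_inv H hL
  · obtain ⟨p, hp, hi⟩ := ext_inv H (L := L.swap) ⟨hL.2.2.1, hL.2.2.2, hL.1, hL.2.1⟩
    refine ⟨p.swap, ?_, ?_⟩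
    · have : p.swap.skel = p.skel.swap := rfl
      rw [this, hp, LSkel.swap_swap]
    · have := hi.swap
      rwa [List.map_cons, map_swap_swap] at this

/-! ### Counting the bins -/

lemma tot_perm {M : Type} [AddCommMonoid M] (f : LSkel → M) {l l' : List LSkel} (h : l.Perm l') :
    tot f l = tot f l' := (h.map f).sum_eq

lemma inv_bound {h : List Pl} (H : HInv h) {l : List LSkel} (hl : l.Perm (h.map skel)) {m : ℕ}
    (hv : ∀ L ∈ l, L.IsValid) (ho : OffPacks l m) :
    ∃ T : Finset ℕ, (∀ p ∈ h, p.bin ∈ T) ∧ T.card ≤ 2 * m := by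
  classical
  obtain ⟨X, Y, zh, zv, nh, r, rv, c, s, sv, SH, SV, H⟩ := H
  rcases eq_or_ne h [] with rfl | hne
  · exact ⟨∅, by simp, by simp⟩
  have hm1 : 1 ≤ m := off_pos ho (by
    rintro rfl
    exact hne (List.map_eq_nil_iff.1 hl.nil_eq.symm))
  obtain ⟨kH, kV, hk, hkH, hkV⟩ := off_volume hv ho
  rw [tot_perm _ hl, H.esh] at hkH
  rw [tot_perm _ hl, H.esv] at hkV
  have hm2 : NeedX zh nh → NeedY zv SH → 2 ≤ m := by
    intro hx hy
    rcases hy with hy | hy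
    · refine off_two hv ho ?_ ?_
      · rwa [tot_perm _ hl, H.ezv]
      · rw [tot_perm _ hl, H.ezh, tot_perm _ hl, H.enh]
        exact hx
    · have : (1 : ℝ) < kH := hy.trans_le hkH
      have : 1 < kH := by exact_mod_cast this
      omega
  -- consecutive pairs of groups account for more than one unit each
  have hH : (r = 0 ∨ r + 1 ≤ 2 * kH) ∧ (2 ≤ r → NeedX zh nh ∧ NeedY zv SH) := by
    rcases H.hok with ⟨hr, -⟩ | ⟨q, hr, hS, hs0, hs1, -, -, hn⟩ | ⟨q, hr, hS, hn⟩
    · exact ⟨Or.inl hr, by omega⟩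
    · have : (q : ℝ) < kH := by linarith
      have : q < kH := by exact_mod_cast this
      refine ⟨by omega, fun h2 => ⟨Or.inr (hn (by omega)), Or.inr ?_⟩⟩
      have : (1 : ℝ) ≤ q := by exact_mod_cast (by omega : 1 ≤ q)
      linarith
    · have : (q : ℝ) + 1 < kH := by linarith
      have : q + 1 < kH := by exact_mod_cast this
      refine ⟨by omega, fun h2 => ⟨Or.inr hn, Or.inr ?_⟩⟩
      have : (0 : ℝ) ≤ q := q.cast_nonneg
      linarith
  have hV : rv = 0 ∨ 1 ≤ r ∧ rv + 1 ≤ 2 * kV := by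
    rcases H.vok with ⟨hr, -⟩ | ⟨hr1, ⟨q, hr, hS, hs0, hs1⟩ | ⟨q, hr, hS⟩⟩
    · exact Or.inl hr
    · have : (q : ℝ) < kV := by linarith
      have : q < kV := by exact_mod_cast this
      omega
    · have : (q : ℝ) + 1 < kV := by linarith
      have : q + 1 < kV := by exact_mod_cast this
      omega
  obtain ⟨E, hE1, hE2, hE3⟩ : ∃ E : Finset ℕ, (NeedX zh nh → NeedY zv SH → 2 ∈ E) ∧ E.card ≤ 1 ∧
      (E.card = 1 → NeedX zh nh ∧ NeedY zv SH) := by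
    by_cases hn : NeedX zh nh ∧ NeedY zv SH
    · exact ⟨{2}, by simp, by simp, fun _ => hn⟩
    · exact ⟨∅, fun a b => absurd ⟨a, b⟩ hn, by simp, by simp⟩
  have hXY := H.xy.1
  refine ⟨({0, 1} ∪ E) ∪ ((Finset.Icc 3 r).image (fun j => 2 * j + 1) ∪
    (Finset.Icc 1 rv).image (fun j => 2 * j + 2)), ?_, ?_⟩
  · intro p hp
    simp only [Finset.mem_union, Finset.mem_insert, Finset.mem_singleton, Finset.mem_image,
      Finset.mem_Icc]
    have hX : p.bin = X → NeedX zh nh → p.bin = 0 ∨ p.bin = 1 ∨ p.bin ∈ E := by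
      intro e hn
      by_cases hy : NeedY zv SH
      · rcases hXY with ⟨e1, -⟩ | ⟨e1, -⟩
        · exact Or.inr (Or.inl (e.trans e1))
        · exact Or.inr (Or.inr (e.trans e1 ▸ hE1 hn hy))
      · exact Or.inr (Or.inl (e.trans (H.xy.2.1 hn hy)))
    have hY : p.bin = Y → NeedY zv SH → p.bin = 0 ∨ p.bin = 1 ∨ p.bin ∈ E := by
      intro e hn
      by_cases hx : NeedX zh nh
      · rcases hXY with ⟨-, e1⟩ | ⟨-, e1⟩
        · exact Or.inr (Or.inr (e.trans e1 ▸ hE1 hx hn))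
        · exact Or.inr (Or.inl (e.trans e1))
      · have := H.xy.2.2 hn hx
        omega
    cases H.kind p hp with
    | small e1 e2 e3 e4 e5 e6 e7 => exact Or.inl (Or.inl (Or.inl e1))
    | top e1 e2 e3 e4 e5 => exact Or.inl (Or.inl (by omega))
    | right e1 e2 e3 e4 e5 => exact Or.inl (Or.inl (by omega))
    | hline e1 e2 e3 e4 e5 e6 e7 => exact Or.inl (or_assoc.2 (hX e6 (Or.inl e7)))
    | vline e1 e2 e3 e4 e5 e6 e7 => exact Or.inl (or_assoc.2 (hY e6 (Or.inl e7)))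
    | lead e1 e2 e3 e4 e5 e6 e7 => exact Or.inl (Or.inl (Or.inl e6))
    | hx e1 e2 e3 e4 e5 e6 e7 e8 e9 => exact Or.inl (or_assoc.2 (hX e6 (Or.inr e8)))
    | hy e1 e2 e3 e4 e5 e6 e7 e8 => exact Or.inl (or_assoc.2 (hY e6 (hH.2 e7).2))
    | hc j e1 e2 e3 e4 e5 e6 e7 e8 e9 => exact Or.inr (Or.inl ⟨j, ⟨e7, e8⟩, e6.symm⟩)
    | vc j e1 e2 e3 e4 e5 e6 e7 e8 e9 => exact Or.inr (Or.inr ⟨j, ⟨e7, e8⟩, e6.symm⟩)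
  · refine (Finset.card_union_le _ _).trans ?_
    have c1 := Finset.card_union_le ({0, 1} : Finset ℕ) E
    have c2 := Finset.card_union_le ((Finset.Icc 3 r).image (fun j => 2 * j + 1))
      ((Finset.Icc 1 rv).image (fun j => 2 * j + 2))
    have c3 := Finset.card_image_le (s := Finset.Icc 3 r) (f := fun j => 2 * j + 1)
    have c4 := Finset.card_image_le (s := Finset.Icc 1 rv) (f := fun j => 2 * j + 2)
    have c5 : ({0, 1} : Finset ℕ).card = 2 := rfl
    rw [Nat.card_Icc] at c3 c4
    by_cases hn : NeedX zh nh ∧ NeedY zv SH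
    · have := hm2 hn.1 hn.2
      omega
    · have : E.card ≠ 1 := fun h => hn (hE3 h)
      have : ¬2 ≤ r := fun h => hn (hH.2 h)
      omega

lemma off_swap {l : List LSkel} {m : ℕ} (hv : ∀ L ∈ l, L.IsValid) (h : OffPacks l m) :
    OffPacks (l.map LSkel.swap) m := by
  obtain ⟨P, hb, hs, hin, hc⟩ := offPacks_pl hv h
  have hlen : (l.map LSkel.swap).length = l.length := List.length_map _
  have hget : ∀ i : Fin (l.map LSkel.swap).length,
      (l.map LSkel.swap).get i = (P (i.cast hlen)).swap.skel := by
    intro i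
    have h1 : (P (i.cast hlen)).swap.skel = (P (i.cast hlen)).skel.swap := rfl
    rw [h1, hs]
    simp
  refine ⟨fun i => (P (i.cast hlen)).bin,
    fun i => ((P (i.cast hlen)).swap.a, (P (i.cast hlen)).swap.b), fun i => hb _, fun i => ?_,
    fun i j hij he => ?_⟩
  · have hval := hv _ (l.get_mem (i.cast hlen))
    rw [← hs] at hval
    rw [hget, inBin_iff _ _ 0 ⟨hval.2.2.1, hval.2.2.2, hval.1, hval.2.1⟩]
    exact (hin _).swap
  · rw [hget, hget, cmp_iff _ _ _ _ 0 0]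
    exact (hc (i.cast hlen) (j.cast hlen) (by simpa [Fin.ext_iff] using hij) he).swap

lemma good_bound {h : List Pl} (H : Good h) {l : List LSkel} (hl : l.Perm (h.map skel)) {m : ℕ}
    (hv : ∀ L ∈ l, L.IsValid) (ho : OffPacks l m) :
    ∃ T : Finset ℕ, (∀ p ∈ h, p.bin ∈ T) ∧ T.card ≤ 2 * m := by
  rcases H with H | H
  · exact inv_bound H hl hv ho
  · obtain ⟨T, hT, hc⟩ := inv_bound H (l := l.map LSkel.swap) (m := m) (by
      have := hl.map LSkel.swap
      rw [List.map_map] at this ⊢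
      exact this) (by
      intro L hL
      obtain ⟨M, hM, rfl⟩ := List.mem_map.1 hL
      obtain ⟨a1, a2, a3, a4⟩ := hv M hM
      exact ⟨a3, a4, a1, a2⟩) (off_swap hv ho)
    exact ⟨T, fun p hp => hT p.swap (List.mem_map_of_mem hp), hc⟩

lemma Good.pairwise {h : List Pl} (H : Good h) :
    h.Pairwise fun p q => p.bin = q.bin → Cmp p q := by
  rcases H with ⟨X, Y, zh, zv, nh, r, rv, c, s, sv, SH, SV, H⟩ |
    ⟨X, Y, zh, zv, nh, r, rv, c, s, sv, SH, SV, H⟩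
  · exact H.pw
  · exact (List.pairwise_map.1 H.pw).imp fun hpq hb => Cmp.of_swap (hpq hb)

lemma Good.inBin {h : List Pl} (H : Good h) {p : Pl} (hp : p ∈ h) : p.InBin := by
  rcases H with ⟨X, Y, zh, zv, nh, r, rv, c, s, sv, SH, SV, H⟩ |
    ⟨X, Y, zh, zv, nh, r, rv, c, s, sv, SH, SV, H⟩
  · exact (H.kind p hp).inBin
  · exact (H.kind p.swap (List.mem_map_of_mem hp)).inBin.swap

/-! ### The online algorithm -/

open Classical in
/-- The placement of a new item `L` after the history `h`: any one that keeps the history good.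
(The alternative is irrelevant, as such a placement exists for valid items.) -/
noncomputable def nextPl (h : List Pl) (L : LSkel) : Pl :=
  if H : ∃ p : Pl, p.skel = L ∧ Good (p :: h) then H.choose else ⟨L.lx, L.ly, 0, 0, 0⟩

/-- The history after the input `l`, most recent item first. -/
noncomputable def hist (l : List LSkel) : List Pl := l.foldl (fun h L => nextPl h L :: h) []

/-- The placement of the last item of a nonempty input. -/
noncomputable def lastPl (l : List LSkel) : Pl := (hist l).headD ⟨0, 0, 0, 0, 0⟩

lemma nextPl_skel (h : List Pl) (L : LSkel) : (nextPl h L).skel = L := by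
  unfold nextPl
  split_ifs with H
  · exact H.choose_spec.1
  · rfl

lemma hist_append (l : List LSkel) (L : LSkel) :
    hist (l ++ [L]) = nextPl (hist l) L :: hist l := by
  simp [hist]

lemma hist_skel (l : List LSkel) : (hist l).map skel = l.reverse := by
  induction l using List.reverseRecOn with
  | nil => rfl
  | append_singleton l L ih => rw [hist_append, List.map_cons, nextPl_skel, ih]; simp

lemma hist_good (l : List LSkel) (hv : ∀ L ∈ l, L.IsValid) : Good (hist l) := by
  induction l using List.reverseRecOn with
  | nil => exact Or.inl inv_nil
  | append_singleton l L ih =>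
    have H := ext_good (ih fun M hM => hv M (by simp [hM])) (hv L (by simp))
    rw [hist_append, nextPl, dif_pos H]
    exact H.choose_spec.2

lemma hist_take (l : List LSkel) {i : ℕ} (hi : i < l.length) :
    hist (l.take (i + 1)) = lastPl (l.take (i + 1)) :: hist (l.take i) ∧
      (lastPl (l.take (i + 1))).skel = l[i] := by
  have h1 : hist (l.take (i + 1)) = nextPl (hist (l.take i)) l[i] :: hist (l.take i) := by
    rw [List.take_succ_eq_append_getElem hi, hist_append]
  have h2 : lastPl (l.take (i + 1)) = nextPl (hist (l.take i)) l[i] := by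
    rw [lastPl, h1]
    rfl
  rw [h1, h2]
  exact ⟨rfl, nextPl_skel _ _⟩

lemma lastPl_mem (l : List LSkel) {i j : ℕ} (hi : i < j) (hj : j ≤ l.length) :
    lastPl (l.take (i + 1)) ∈ hist (l.take j) := by
  induction j with
  | zero => omega
  | succ j ih =>
    rcases Nat.lt_succ_iff_lt_or_eq.1 hi with hlt | rfl
    · rw [(hist_take l (by omega)).1]
      exact List.mem_cons_of_mem _ (ih hlt (by omega))
    · rw [(hist_take l (by omega)).1]
      exact List.mem_cons_self

/-- there is a deterministic online bin-packing algorithm for L-skeletons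
that on every input sequence produces a valid packing using at most `2·OPT` bins. -/
theorem stmt14 :
    ∃ A : List LSkel → ℕ × ℝ × ℝ,
      ∀ l : List LSkel, (∀ L ∈ l, L.IsValid) →
        OnlinePacks A l ∧ binsUsed A l ≤ 2 * OPT l := by
  refine ⟨fun l => ((lastPl l).bin, (lastPl l).a, (lastPl l).b), fun l hv => ?_⟩
  set A : List LSkel → ℕ × ℝ × ℝ := fun l => ((lastPl l).bin, (lastPl l).a, (lastPl l).b) with hA
  have hget : ∀ i : Fin l.length, l.get i = (lastPl (l.take (i.1 + 1))).skel :=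
    fun i => ((hist_take l i.2).2).symm
  have hplace : ∀ i : Fin l.length, placeOf A l i = ((lastPl (l.take (i.1 + 1))).bin,
    (lastPl (l.take (i.1 + 1))).a, (lastPl (l.take (i.1 + 1))).b) := fun i => rfl
  have hmem : ∀ i : Fin l.length, lastPl (l.take (i.1 + 1)) ∈ hist l := fun i => by
    simpa using lastPl_mem l i.2 le_rfl
  have hlt : ∀ i j : Fin l.length, i < j →
      (lastPl (l.take (j.1 + 1))).bin = (lastPl (l.take (i.1 + 1))).bin →
      Cmp (lastPl (l.take (j.1 + 1))) (lastPl (l.take (i.1 + 1))) := by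
    intro i j hij
    have hg := (hist_good (l.take (j.1 + 1)) fun L hL => hv L (List.mem_of_mem_take hL)).pairwise
    rw [(hist_take l j.2).1, List.pairwise_cons] at hg
    exact hg.1 _ (lastPl_mem l hij j.2.le)
  have hgood := hist_good l hv
  refine ⟨⟨fun i => ?_, fun i j hij hb => ?_⟩, ?_⟩
  · have hvi := hv _ (l.get_mem i)
    rw [inBin_iff _ _ 0 hvi, hget, hplace]
    have hin := hgood.inBin (hmem i)
    exact hin
  · rw [cmp_iff _ _ _ _ 0 0, hget, hget, hplace, hplace]
    rcases lt_or_gt_of_ne hij with h | h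
    · exact (hlt i j h hb.symm).symm
    · exact hlt j i h hb
  · obtain ⟨T, hT, hc⟩ := good_bound hgood (l := l) (by
      rw [hist_skel]
      exact l.reverse_perm.symm) hv (off_OPT l hv)
    refine (Finset.card_le_card fun n hn => ?_).trans hc
    obtain ⟨i, -, rfl⟩ := Finset.mem_image.1 hn
    exact hT _ (hmem i)
end

section
/- Let Z and Z′ be Z-skeletons with parameters (w, a, b) and (w′, a′, b′) satisfying w > 1/2, w′ > 1/2, a + b = a′ + b′ = 1, a, b, a′, b′ ≥ 0 and b < b′. Suppose Z is translated by (x, b) and Z′ is translated by (x′, b′), where 0 ≤ x ≤ 1 − w and 0 ≤ x′ ≤ 1 − w′ (these are exactly the translations placing each skeleton inside [0,1]²). Then the two translates have a common point if and only if x′ ≤ x or x′ + w′ ≤ x + w. -/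
/-!
The translate of a skeleton with parameters `(w, a, b)`, `a + b = 1`, by `(x, b)` consists of the left
arm `{x} × [b, 1]`, the bar `[x, x + w] × {b}` and the right arm `{x + w} × [0, b]`
(`mem_planeTranslate_toSet`). Since both widths exceed `1/2`, each left arm has abscissa `< 1/2` and
each right arm has abscissa `> 1/2`. As `b < b'`, the bar of `Z'` lies above the bar of `Z`.

If `x' ≤ x`, the left arm of `Z` crosses the bar of `Z'` at `(x, b')`; if `x' + w' ≤ x + w`, the
right arm of `Z'` crosses the bar of `Z` at `(x' + w', b)`. Conversely, when `x < x'` and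
`x + w < x' + w'`, checking the nine pairs of segments shows that none of them meet.
-/

/-- A Z-skeleton, given by its parameters `(w, a, b)`. -/
structure ZSkel where
  w : ℝ
  a : ℝ
  b : ℝ

/-- The point set `({0}×[0,a]) ∪ ([0,w]×{0}) ∪ ({w}×[−b,0])` of a Z-skeleton. -/
def ZSkel.toSet (Z : ZSkel) : Set (ℝ × ℝ) :=
  Set.Icc ((0, 0) : ℝ × ℝ) (0, Z.a) ∪ Set.Icc ((0, 0) : ℝ × ℝ) (Z.w, 0) ∪
    Set.Icc ((Z.w, -Z.b) : ℝ × ℝ) (Z.w, 0)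

theorem mem_planeTranslate_toSet {w a b x : ℝ} (hab : a + b = 1) (p q : ℝ) :
    (p, q) ∈ planeTranslate (x, b) (ZSkel.toSet ⟨w, a, b⟩) ↔
      (p = x ∧ b ≤ q ∧ q ≤ 1) ∨ (x ≤ p ∧ p ≤ x + w ∧ q = b) ∨ (p = x + w ∧ 0 ≤ q ∧ q ≤ b) := by
  simp only [planeTranslate, ZSkel.toSet, Set.mem_image, Set.mem_union, Set.mem_Icc, Prod.exists,
    Prod.mk_le_mk, Prod.mk_add_mk, Prod.mk.injEq]
  constructor
  · rintro ⟨u, v, h, rfl, rfl⟩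
    rcases h with (h | h) | h
    · left
      refine ⟨?_, ?_, ?_⟩ <;> linarith [h.1.1, h.1.2, h.2.1, h.2.2]
    · right; left
      refine ⟨?_, ?_, ?_⟩ <;> linarith [h.1.1, h.1.2, h.2.1, h.2.2]
    · right; right
      refine ⟨?_, ?_, ?_⟩ <;> linarith [h.1.1, h.1.2, h.2.1, h.2.2]
  · intro h
    refine ⟨p - x, q - b, ?_, by ring, by ring⟩
    rcases h with ⟨h₁, h₂, h₃⟩ | ⟨h₁, h₂, h₃⟩ | ⟨h₁, h₂, h₃⟩
    · left; left
      refine ⟨⟨?_, ?_⟩, ?_, ?_⟩ <;> linarith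
    · left; right
      refine ⟨⟨?_, ?_⟩, ?_, ?_⟩ <;> linarith
    · right
      refine ⟨⟨?_, ?_⟩, ?_, ?_⟩ <;> linarith

/-- for Z-skeletons `Z = (w, a, b)` and `Z' = (w', a', b')` with
`w, w' > 1/2`, `a + b = a' + b' = 1` and `b < b'`, translated by `(x, b)` and `(x', b')`
respectively with `0 ≤ x ≤ 1 − w` and `0 ≤ x' ≤ 1 − w'` (exactly the translations placing
them inside `[0,1]²`), the two translates meet if and only if `x' ≤ x` or
`x' + w' ≤ x + w`. -/
theorem stmt19 (w a b w' a' b' x x' : ℝ)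
    (hw : 1 / 2 < w) (hw' : 1 / 2 < w')
    (ha : 0 ≤ a) (hb : 0 ≤ b) (ha' : 0 ≤ a') (hb' : 0 ≤ b')
    (hab : a + b = 1) (hab' : a' + b' = 1) (hbb' : b < b')
    (hx0 : 0 ≤ x) (hx1 : x ≤ 1 - w) (hx0' : 0 ≤ x') (hx1' : x' ≤ 1 - w') :
    (planeTranslate (x, b) (ZSkel.toSet ⟨w, a, b⟩) ∩
      planeTranslate (x', b') (ZSkel.toSet ⟨w', a', b'⟩)).Nonempty ↔
    x' ≤ x ∨ x' + w' ≤ x + w := by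
  constructor
  · rintro ⟨⟨p, q⟩, h, h'⟩
    rw [mem_planeTranslate_toSet hab] at h
    rw [mem_planeTranslate_toSet hab'] at h'
    by_contra! hc
    obtain ⟨hc₁, hc₂⟩ := hc
    rcases h with ⟨h₁, h₂, h₃⟩ | ⟨h₁, h₂, h₃⟩ | ⟨h₁, h₂, h₃⟩ <;>
      rcases h' with ⟨k₁, k₂, k₃⟩ | ⟨k₁, k₂, k₃⟩ | ⟨k₁, k₂, k₃⟩ <;> linarith
  · rintro (h | h)
    · refine ⟨(x, b'), (mem_planeTranslate_toSet hab _ _).2 (Or.inl ⟨rfl, ?_, ?_⟩),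
        (mem_planeTranslate_toSet hab' _ _).2 (Or.inr (Or.inl ⟨h, ?_, rfl⟩))⟩ <;> linarith
    · refine ⟨(x' + w', b), (mem_planeTranslate_toSet hab _ _).2 (Or.inr (Or.inl ⟨?_, h, rfl⟩)),
        (mem_planeTranslate_toSet hab' _ _).2 (Or.inr (Or.inr ⟨rfl, ?_, ?_⟩))⟩ <;> linarith
end
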